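/- Boundary strip smallness: Let 𝒯_h be a shape-regular triangulation of a bounded polygonal domain Ω with shape regularity constant 𝒦, and let Ω_δ be a boundary strip of width of order δ attached to ∂Ω. There is a constant C depending only on Ω and 𝒦 such that ∫_{Ω_δ} u² ≤ C δ ‖u‖²_{H¹_h} for all u ∈ H¹_h. -/

import Mathlib

open MeasureTheory Set
open scoped Classical

noncomputable section

abbrev Pt : Type := EuclideanSpace ℝ (Fin 2)

structure Tri where
  A : Pt
  B : Pt
  C : Pt

namespace Tri

def cross (t : Tri) : ℝ :=
  (t.B 0 - t.A 0) * (t.C 1 - t.A 1) - (t.B 1 - t.A 1) * (t.C 0 - t.A 0)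

/-- Non-degeneracy (the three vertices are not collinear). -/
def Nondeg (t : Tri) : Prop := t.cross ≠ 0

def area (t : Tri) : ℝ := |t.cross| / 2

def la (t : Tri) : ℝ := dist t.B t.C
def lb (t : Tri) : ℝ := dist t.A t.C
def lc (t : Tri) : ℝ := dist t.A t.B

/-- Inradius of a triangle: `r = 2·Area/(a+b+c)`. -/
def inradius (t : Tri) : ℝ := 2 * t.area / (t.la + t.lb + t.lc)

/-- Circumradius of a triangle: `R = abc/(4·Area)`. -/
def circumradius (t : Tri) : ℝ := t.la * t.lb * t.lc / (4 * t.area)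

/-- Shape regularity constant `R/r` of a triangle. -/
def shapeReg (t : Tri) : ℝ := t.circumradius / t.inradius

def closedHull (t : Tri) : Set Pt := convexHull ℝ {t.A, t.B, t.C}

def openHull (t : Tri) : Set Pt := interior t.closedHull

def edgeList (t : Tri) : List (Pt × Pt) := [(t.A, t.B), (t.B, t.C), (t.C, t.A)]

end Tri

/-- Two (oriented) edges coincide as unoriented segments. -/
def SameEdge (e e' : Pt × Pt) : Prop := e' = e ∨ e' = (e.2, e.1)

/-- Arclength integral of `f` over the straight segment from `p` to `q`. -/
def segInt (p q : Pt) (f : Pt → ℝ) : ℝ :=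
  dist p q * ∫ s in (0:ℝ)..1, f (p + s • (q - p))

/-- A bounded polygonal domain in the plane. -/
def IsPolygon (Ω : Set Pt) : Prop :=
  Ω.Nonempty ∧ Bornology.IsBounded Ω ∧
    ∃ S : Finset Tri, (∀ t ∈ S, t.Nondeg) ∧ Ω = interior (⋃ t ∈ S, t.closedHull)

/-- A (conforming) triangulation of the polygonal domain `Ω`. -/
structure Triangulation (Ω : Set Pt) where
  tris : Finset Tri
  nondeg : ∀ t ∈ tris, t.Nondeg
  cover : Ω = interior (⋃ t ∈ tris, t.closedHull)
  disj : ∀ t ∈ tris, ∀ t' ∈ tris, t ≠ t' → t.openHull ∩ t'.openHull = ∅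
  conforming : ∀ t ∈ tris, ∀ e ∈ t.edgeList,
      segment ℝ e.1 e.2 ⊆ frontier Ω ∨
      ∃ t' ∈ tris, t' ≠ t ∧ ∃ e' ∈ t'.edgeList, SameEdge e e'

namespace Triangulation

variable {Ω : Set Pt}

/-- All triangles have shape regularity constant at most `K`. -/
def ShapeRegular (T : Triangulation Ω) (K : ℝ) : Prop :=
  ∀ t ∈ T.tris, t.shapeReg ≤ K

/-- `‖u‖²_{L²(Ω)}` of a piecewise function. -/
def sqL2 (T : Triangulation Ω) (u : Tri → Pt → ℝ) : ℝ :=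
  ∑ t ∈ T.tris, ∫ x in t.openHull, (u t x) ^ 2

/-- `∫_{Ω_h} |∇u|²` of a piecewise function. -/
def gradSq (T : Triangulation Ω) (u : Tri → Pt → ℝ) : ℝ :=
  ∑ t ∈ T.tris, ∫ x in t.openHull, ‖fderiv ℝ (u t) x‖ ^ 2

/-- Contribution `Σ_{e shared by t₁,t₂} |e|⁻¹ ∫_e [u]²` of the common edges of `t₁, t₂`. -/
def edgeJump (u : Tri → Pt → ℝ) (t₁ t₂ : Tri) : ℝ :=
  ((t₁.edgeList.map fun e =>
    if ∃ e' ∈ t₂.edgeList, SameEdge e e' then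
      (dist e.1 e.2)⁻¹ * segInt e.1 e.2 (fun x => (u t₁ x - u t₂ x) ^ 2)
    else 0)).sum

/-- `Σ_{e ∈ ℰ⁰_h} |e|⁻¹ ∫_e [u]²` (each interior edge counted once, whence the `1/2`). -/
def jumpSq (T : Triangulation Ω) (u : Tri → Pt → ℝ) : ℝ :=
  (1/2) * ∑ t₁ ∈ T.tris, ∑ t₂ ∈ T.tris, if t₁ ≠ t₂ then edgeJump u t₁ t₂ else 0

/-- The squared `H¹_h` norm. -/
def normSq (T : Triangulation Ω) (u : Tri → Pt → ℝ) : ℝ :=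
  T.sqL2 u + T.gradSq u + T.jumpSq u

/-- `∫_{∂Ω} u²` via the traces from the triangles having a boundary edge. -/
def bdrySq (T : Triangulation Ω) (u : Tri → Pt → ℝ) : ℝ :=
  ∑ t ∈ T.tris, ((t.edgeList.map fun e =>
    if segment ℝ e.1 e.2 ⊆ frontier Ω then segInt e.1 e.2 (fun x => (u t x) ^ 2) else 0)).sum

/-- `u` is a piecewise `H¹` function subordinate to the triangulation. -/
def PwH1 (T : Triangulation Ω) (u : Tri → Pt → ℝ) : Prop :=
  ∀ t ∈ T.tris, ContinuousOn (u t) t.closedHull ∧ DifferentiableOn ℝ (u t) t.openHull ∧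
    IntegrableOn (fun x => (u t x) ^ 2) t.openHull ∧
    IntegrableOn (fun x => ‖fderiv ℝ (u t) x‖ ^ 2) t.openHull

/-- `v : ℝ² → ℝ` is the extension by zero of the piecewise function `u`. -/
def Glues (T : Triangulation Ω) (u : Tri → Pt → ℝ) (v : Pt → ℝ) : Prop :=
  (∀ t ∈ T.tris, ∀ x ∈ t.openHull, v x = u t x) ∧ ∀ x, x ∉ Ω → v x = 0

end Triangulation

/-!
Test the divergence of a Lipschitz vector field `F` against `u²`. If `F` vanishes on `∂Ω`, is of
size `O(δ)`, and `div F ≥ 1/3 - O(δ)` on the strip while `div F ≥ -O(δ)` elsewhere, then `∫ u²` over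
the strip is at most `3 ∫ u² div F + O(δ) ‖u‖²`. By the divergence theorem on each triangle,
`∫ u² div F` is a volume term `-∫ 2 u F · ∇u` plus the fluxes of `u² F` through the sides. Since `F`
vanishes on `∂Ω`, only interior edges contribute, and the two fluxes through such an edge cancel up
to a jump `O(δ) ∫ |[u]| (|u₁| + |u₂|)`, which is bounded by the jump term of the norm and the traces
of `u` on the sides; shape regularity makes the constant of the trace inequality uniform.

For a single triangle such a field is `min (depth, s) • (z - x)`, where the depth is the smallest
barycentric coordinate, `z` is the centroid and `s` is of order `δ`. The field for `Ω` is the sum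
over the finitely many triangles that make up `Ω`, which do not depend on the triangulation.
-/

/-- The oriented area `v ∧ w` of the parallelogram spanned by two plane vectors. -/
def wedge (v w : Pt) : ℝ := v 0 * w 1 - v 1 * w 0

lemma wedge_add_right (v w w' : Pt) : wedge v (w + w') = wedge v w + wedge v w' := by
  simp only [wedge, PiLp.add_apply]; ring

lemma wedge_smul_right (c : ℝ) (v w : Pt) : wedge v (c • w) = c * wedge v w := by
  simp only [wedge, PiLp.smul_apply, smul_eq_mul]; ring

lemma wedge_neg_left (v w : Pt) : wedge (-v) w = -wedge v w := by
  simp only [wedge, PiLp.neg_apply]; ring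

lemma wedge_swap (v w : Pt) : wedge w v = -wedge v w := by
  simp only [wedge]; ring

lemma abs_wedge_le (v w : Pt) : |wedge v w| ≤ ‖v‖ * ‖w‖ := by
  rw [← Real.sqrt_sq_eq_abs, EuclideanSpace.norm_eq, EuclideanSpace.norm_eq,
    ← Real.sqrt_mul (by positivity)]
  refine Real.sqrt_le_sqrt ?_
  simp only [wedge, Fin.sum_univ_two, Real.norm_eq_abs, sq_abs]
  nlinarith [sq_nonneg (v 0 * w 0 + v 1 * w 1)]

/-- The linear form `v ↦ v ∧ w`. -/
def wedgeCLM (w : Pt) : Pt →L[ℝ] ℝ :=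
  w 1 • EuclideanSpace.proj 0 - w 0 • EuclideanSpace.proj 1

@[simp]
lemma wedgeCLM_apply (w v : Pt) : wedgeCLM w v = wedge v w := by
  simp [wedgeCLM, wedge]; ring

lemma wedge_smul_add_wedge_smul (v a c : Pt) :
    wedge v c • a + wedge a v • c = wedge a c • v := by
  ext i
  fin_cases i <;> simp [wedge] <;> ring

lemma wedge_map_add_wedge_map (T : Pt →ₗ[ℝ] Pt) (a c : Pt) :
    wedge (T a) c + wedge a (T c) = LinearMap.trace ℝ Pt T * wedge a c := by
  have hsplit (v : Pt) : v = v 0 • EuclideanSpace.single 0 1 + v 1 • EuclideanSpace.single 1 1 := by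
    ext i
    fin_cases i <;> simp
  rw [LinearMap.trace_eq_sum_inner T (EuclideanSpace.basisFun (Fin 2) ℝ), hsplit a, hsplit c]
  simp [wedge, EuclideanSpace.inner_single_left]
  ring

namespace Tri

lemma cross_eq_wedge (t : Tri) : t.cross = wedge (t.B - t.A) (t.C - t.A) := rfl

/-- The vertices `A`, `B`, `C`, indexed cyclically. -/
def vertex (t : Tri) : Fin 3 → Pt := ![t.A, t.B, t.C]

/-- The vector along the `i`-th side, which runs from vertex `i` to vertex `i + 1` and is opposite
to vertex `i + 2`. -/
def side (t : Tri) (i : Fin 3) : Pt := t.vertex (i + 1) - t.vertex i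

lemma range_vertex (t : Tri) : range t.vertex = {t.A, t.B, t.C} := by
  rw [vertex, Matrix.range_cons, Matrix.range_cons, Matrix.range_cons, Matrix.range_empty,
    union_empty, singleton_union, singleton_union]

lemma Nondeg.affineIndependent {t : Tri} (h : t.Nondeg) : AffineIndependent ℝ t.vertex := by
  refine affineIndependent_iff_not_collinear_set.2 fun hcol => h ?_
  obtain ⟨v, hv⟩ := (collinear_iff_of_mem (mem_insert t.A _)).1 hcol
  obtain ⟨r, hr⟩ := hv t.B (by simp)
  obtain ⟨s, hs⟩ := hv t.C (by simp)
  simp only [cross, hr, hs, vadd_eq_add, PiLp.add_apply, PiLp.smul_apply, smul_eq_mul]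
  ring

/-- The vertices of a non-degenerate triangle as an affine basis of the plane; its coordinates are
the barycentric coordinates. -/
def Nondeg.basis {t : Tri} (h : t.Nondeg) : AffineBasis (Fin 3) ℝ Pt where
  toFun := t.vertex
  ind' := h.affineIndependent
  tot' := h.affineIndependent.affineSpan_eq_top_iff_card_eq_finrank_add_one.2 (by simp)

lemma Nondeg.basis_apply {t : Tri} (h : t.Nondeg) (i : Fin 3) : h.basis i = t.vertex i := rfl

lemma Nondeg.closedHull_eq {t : Tri} (h : t.Nondeg) :
    t.closedHull = {x | ∀ i, 0 ≤ h.basis.coord i x} := by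
  rw [closedHull, ← t.range_vertex]
  exact h.basis.convexHull_eq_nonneg_coord

lemma Nondeg.openHull_eq {t : Tri} (h : t.Nondeg) :
    t.openHull = {x | ∀ i, 0 < h.basis.coord i x} := by
  rw [openHull, closedHull, ← t.range_vertex]
  exact h.basis.interior_convexHull

lemma wedge_vertex_sub_side (t : Tri) (i j : Fin 3) :
    wedge (t.side i) (t.vertex j - t.vertex i) = if j = i + 2 then t.cross else 0 := by
  fin_cases i <;> fin_cases j <;> simp [side, vertex, wedge, cross] <;> ring

lemma Nondeg.cross_mul_coord {t : Tri} (h : t.Nondeg) (i : Fin 3) (x : Pt) :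
    t.cross * h.basis.coord (i + 2) x = wedge (t.side i) (x - t.vertex i) := by
  have hx : x - t.vertex i = ∑ j, h.basis.coord j x • (t.vertex j - t.vertex i) := by
    simp_rw [smul_sub, Finset.sum_sub_distrib, ← Finset.sum_smul,
      h.basis.sum_coord_apply_eq_one x, one_smul]
    exact congrArg (· - t.vertex i) (h.basis.linear_combination_coord_eq_self x).symm
  rw [hx, Fin.sum_univ_three]
  simp only [wedge_add_right, wedge_smul_right, wedge_vertex_sub_side]
  fin_cases i <;> simp [mul_comm]

/-- The affine parametrization of the plane carrying `(0, 0)`, `(0, 1)`, `(1, 0)` to the vertices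
`A`, `B`, `C`, so that freezing the first variable gives a line parallel to `AB`. -/
def par (t : Tri) (p : ℝ × ℝ) : Pt := t.A + p.2 • (t.B - t.A) + p.1 • (t.C - t.A)

lemma continuous_par (t : Tri) : Continuous t.par := by
  unfold par; fun_prop

lemma Nondeg.coord_par {t : Tri} (h : t.Nondeg) (p : ℝ × ℝ) (i : Fin 3) :
    h.basis.coord i (t.par p) = ![1 - p.1 - p.2, p.2, p.1] i := by
  refine mul_left_cancel₀ h ?_
  have hi : i = (i + 1) + 2 := by fin_cases i <;> rfl
  rw [hi, h.cross_mul_coord]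
  fin_cases i <;> simp [side, vertex, par, wedge, cross] <;> ring

lemma Nondeg.par_coord {t : Tri} (h : t.Nondeg) (x : Pt) :
    t.par (h.basis.coord 2 x, h.basis.coord 1 x) = x := by
  refine h.basis.ext_elem fun i => ?_
  have hsum := h.basis.sum_coord_apply_eq_one x
  rw [Fin.sum_univ_three] at hsum
  rw [h.coord_par]
  fin_cases i <;> simp
  linarith

lemma Nondeg.par_mem_openHull {t : Tri} (h : t.Nondeg) {p : ℝ × ℝ} :
    t.par p ∈ t.openHull ↔ p.1 ∈ Ioo 0 1 ∧ p.2 ∈ Ioo 0 (1 - p.1) := by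
  have hcoord : t.par p ∈ t.openHull ↔ ∀ i : Fin 3, 0 < ![1 - p.1 - p.2, p.2, p.1] i := by
    simp only [h.openHull_eq, mem_ofPred_eq, h.coord_par]
  simp only [hcoord, Fin.forall_fin_succ, mem_Ioo, Matrix.cons_val_zero, Matrix.cons_val_succ,
    IsEmpty.forall_iff, and_true]
  grind

lemma Nondeg.par_mem_closedHull {t : Tri} (h : t.Nondeg) {p : ℝ × ℝ} :
    t.par p ∈ t.closedHull ↔ 0 ≤ p.1 ∧ p.2 ∈ Icc 0 (1 - p.1) := by
  have hcoord : t.par p ∈ t.closedHull ↔ ∀ i : Fin 3, 0 ≤ ![1 - p.1 - p.2, p.2, p.1] i := by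
    simp only [h.closedHull_eq, mem_ofPred_eq, h.coord_par]
  simp only [hcoord, Fin.forall_fin_succ, mem_Icc, Matrix.cons_val_zero, Matrix.cons_val_succ,
    IsEmpty.forall_iff, and_true]
  grind

lemma Nondeg.measurableEmbedding_par {t : Tri} (h : t.Nondeg) : MeasurableEmbedding t.par :=
  Homeomorph.measurableEmbedding
    { toFun := t.par
      invFun := fun x => (h.basis.coord 2 x, h.basis.coord 1 x)
      left_inv := fun p => by simp [h.coord_par]
      right_inv := h.par_coord
      continuous_toFun := t.continuous_par
      continuous_invFun := (h.basis.coord 2).continuous_of_finiteDimensional.prodMk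
        (h.basis.coord 1).continuous_of_finiteDimensional }

lemma Nondeg.map_par {t : Tri} (h : t.Nondeg) :
    Measure.map t.par volume = ENNReal.ofReal |t.cross|⁻¹ • (volume : Measure Pt) := by
  let M : Matrix (Fin 2) (Fin 2) ℝ :=
    !![t.C 0 - t.A 0, t.B 0 - t.A 0; t.C 1 - t.A 1, t.B 1 - t.A 1]
  have hdet : M.det = -t.cross := by
    simp only [M, Matrix.det_fin_two_of, cross]; ring
  have hpar : t.par = (t.A + ·) ∘ (WithLp.toLp 2 : (Fin 2 → ℝ) → Pt) ∘
      Matrix.toLin' M ∘ (MeasurableEquiv.finTwoArrow (α := ℝ)).symm := by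
    funext p; ext i
    fin_cases i <;> simp [par, M, MeasurableEquiv.finTwoArrow] <;> ring
  have htoLp := PiLp.volume_preserving_toLp (Fin 2)
  have hM : Measurable (Matrix.toLin' M) :=
    (LinearMap.continuous_of_finiteDimensional _).measurable
  have hfinTwo := (volume_preserving_finTwoArrow ℝ).symm
  rw [hpar, ← Measure.map_map (measurable_const_add _)
      (htoLp.measurable.comp (hM.comp hfinTwo.measurable)),
    ← Measure.map_map htoLp.measurable (hM.comp hfinTwo.measurable),
    ← Measure.map_map hM hfinTwo.measurable, hfinTwo.map_eq,
    Real.map_matrix_volume_pi_eq_smul_volume_pi (hdet ▸ neg_ne_zero.2 h), Measure.map_smul,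
    htoLp.map_eq, Measure.map_smul, (measurePreserving_add_left volume t.A).map_eq, hdet, abs_inv,
    abs_neg]

lemma measurableSet_openHull (t : Tri) : MeasurableSet t.openHull :=
  isOpen_interior.measurableSet

lemma Nondeg.indicator_openHull_par {t : Tri} (h : t.Nondeg) (f : Pt → ℝ) (y : ℝ) :
    (fun x => t.openHull.indicator f (t.par (y, x))) =
      if y ∈ Ioo 0 1 then (Ioo 0 (1 - y)).indicator fun x => f (t.par (y, x)) else 0 := by
  funext x
  split_ifs with hy <;> simp [indicator_apply, h.par_mem_openHull, hy]

lemma Nondeg.integrable_indicator_par {t : Tri} (h : t.Nondeg) {f : Pt → ℝ}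
    (hf : IntegrableOn f t.openHull) :
    Integrable (fun p => t.openHull.indicator f (t.par p)) (volume.prod volume) := by
  refine (h.measurableEmbedding_par.integrable_map_iff (g := t.openHull.indicator f)).1 ?_
  rw [← Measure.volume_eq_prod, h.map_par]
  exact (hf.integrable_indicator t.measurableSet_openHull).smul_measure ENNReal.ofReal_ne_top

lemma Nondeg.ae_intervalIntegrable_par {t : Tri} (h : t.Nondeg) {f : Pt → ℝ}
    (hf : IntegrableOn f t.openHull) :
    ∀ᵐ y : ℝ, y ∈ Ioo 0 1 →
      IntervalIntegrable (fun x => f (t.par (y, x))) volume 0 (1 - y) := by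
  filter_upwards [(h.integrable_indicator_par hf).prod_right_ae] with y hy hy01
  rw [h.indicator_openHull_par, if_pos hy01, integrable_indicator_iff measurableSet_Ioo] at hy
  exact (intervalIntegrable_iff_integrableOn_Ioo_of_le (sub_nonneg.2 hy01.2.le)).2 hy

lemma Nondeg.setIntegral_openHull {t : Tri} (h : t.Nondeg) {f : Pt → ℝ}
    (hf : IntegrableOn f t.openHull) :
    ∫ x in t.openHull, f x =
      |t.cross| * ∫ y in Ioo (0 : ℝ) 1, ∫ x in (0 : ℝ)..(1 - y), f (t.par (y, x)) := by
  have hcross : 0 < |t.cross| := abs_pos.2 h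
  have hpar : ∫ p, t.openHull.indicator f (t.par p) = |t.cross|⁻¹ * ∫ x in t.openHull, f x := by
    rw [← integral_indicator t.measurableSet_openHull, ← h.measurableEmbedding_par.integral_map,
      h.map_par, integral_smul_measure, ENNReal.toReal_ofReal (by positivity), smul_eq_mul]
  rw [← mul_inv_cancel_left₀ hcross.ne' (∫ x in t.openHull, f x), ← hpar, Measure.volume_eq_prod,
    integral_prod _ (h.integrable_indicator_par hf), ← integral_indicator measurableSet_Ioo]
  congr 2 with y
  rw [h.indicator_openHull_par]
  split_ifs with hy
  · rw [integral_indicator measurableSet_Ioo, indicator_of_mem hy,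
      intervalIntegral.integral_of_le (sub_nonneg.2 hy.2.le), integral_Ioc_eq_integral_Ioo]
  · simp [indicator_of_notMem hy]

lemma Nondeg.ae_ae_par {t : Tri} (h : t.Nondeg) {P : Pt → Prop} (hP : ∀ᵐ x, P x) :
    ∀ᵐ y : ℝ, ∀ᵐ x : ℝ, P (t.par (y, x)) := by
  refine Measure.ae_ae_of_ae_prod (μ := (volume : Measure ℝ)) (ν := (volume : Measure ℝ))
    (p := fun q => P (t.par q)) ?_
  rw [← Measure.volume_eq_prod]
  refine ae_of_ae_map t.continuous_par.aemeasurable ?_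
  rw [h.map_par]
  exact Measure.ae_smul_measure hP _

end Tri

lemma absolutelyContinuousOnInterval_of_hasDerivAt {f f' : ℝ → ℝ} {a b : ℝ} (hab : a ≤ b)
    (hf : ContinuousOn f (Icc a b)) (hderiv : ∀ x ∈ Ioo a b, HasDerivAt f (f' x) x)
    (hint : IntervalIntegrable f' volume a b) : AbsolutelyContinuousOnInterval f a b := by
  have hFTC (x : ℝ) (hx : x ∈ uIcc a b) : f x = f a + ∫ s in a..x, f' s := by
    rw [uIcc_of_le hab] at hx
    rw [intervalIntegral.integral_eq_sub_of_hasDerivAt_of_le hx.1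
      (hf.mono (Icc_subset_Icc_right hx.2)) (fun y hy => hderiv y ⟨hy.1, hy.2.trans_le hx.2⟩)
      (hint.mono_set (by rw [uIcc_of_le hx.1, uIcc_of_le hab]; exact Icc_subset_Icc_right hx.2))]
    ring
  refine (hint.absolutelyContinuousOnInterval_intervalIntegral left_mem_uIcc).congr' ?_
  filter_upwards [Filter.mem_inf_of_right (Filter.mem_principal_self _)] with E hE
  refine Finset.sum_congr rfl fun i hi => ?_
  rw [hFTC _ (hE.1 i hi).1, hFTC _ (hE.1 i hi).2, dist_add_left]

lemma integral_deriv_mul_add_of_lipschitzWith {f f' g g' : ℝ → ℝ} {a b : ℝ} {L : NNReal}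
    (hab : a ≤ b) (hf : ContinuousOn f (Icc a b)) (hf' : ∀ x ∈ Ioo a b, HasDerivAt f (f' x) x)
    (hint : IntervalIntegrable f' volume a b) (hg : LipschitzWith L g)
    (hg' : ∀ᵐ x, HasDerivAt g (g' x) x) :
    ∫ x in a..b, (f' x * g x + f x * g' x) = f b * g b - f a * g a := by
  rw [← (absolutelyContinuousOnInterval_of_hasDerivAt hab hf hf' hint).integral_deriv_mul_eq_sub
    hg.lipschitzOnWith.absolutelyContinuousOnInterval]
  simp_rw [intervalIntegral.integral_of_le hab, integral_Ioc_eq_integral_Ioo]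
  refine setIntegral_congr_ae measurableSet_Ioo ?_
  filter_upwards [hg'] with x hgx hx
  rw [(hf' x hx).deriv, hgx.deriv]

/-- The mean of `g` over the segment from `p` to `q`. -/
def segAvg (g : Pt → ℝ) (p q : Pt) : ℝ := ∫ s in (0 : ℝ)..1, g (p + s • (q - p))

lemma segAvg_comm (g : Pt → ℝ) (p q : Pt) : segAvg g p q = segAvg g q p := by
  have h := intervalIntegral.integral_comp_sub_left (fun s => g (q + s • (p - q))) (1 : ℝ)
    (a := 0) (b := 1)
  rw [sub_zero, sub_self] at h
  rw [segAvg, segAvg, ← h]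
  congr 1 with s
  congr 1
  module

lemma segAvg_sq_nonneg (u : Pt → ℝ) (p q : Pt) : 0 ≤ segAvg (fun x => u x ^ 2) p q :=
  intervalIntegral.integral_nonneg zero_le_one fun _ _ => sq_nonneg _

section Divergence

variable {E : Type*} [NormedAddCommGroup E] [NormedSpace ℝ E]

/-- The divergence of a vector field, as the trace of its derivative. -/
def divergence (F : E → E) (x : E) : ℝ := LinearMap.trace ℝ E (fderiv ℝ F x)

@[simp]
lemma divergence_zero : divergence (0 : E → E) = 0 := by
  ext x
  simp [divergence]

lemma divergence_add {F G : E → E} {x : E} (hF : DifferentiableAt ℝ F x)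
    (hG : DifferentiableAt ℝ G x) : divergence (F + G) x = divergence F x + divergence G x := by
  rw [divergence, fderiv_add hF hG, ContinuousLinearMap.toLinearMap_add, map_add, divergence,
    divergence]

variable [FiniteDimensional ℝ E]

lemma exists_abs_divergence_le {F : E → E} {L : NNReal} (hF : LipschitzWith L F) :
    ∃ M, ∀ x, |divergence F x| ≤ M := by
  let tr := (LinearMap.trace ℝ E ∘ₗ ContinuousLinearMap.coeLM ℝ).toContinuousLinearMap
  exact ⟨‖tr‖ * L, fun x => tr.le_opNorm_of_le (norm_fderiv_le_of_lipschitz ℝ hF)⟩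

lemma measurable_divergence [MeasurableSpace E] [BorelSpace E] (F : E → E) :
    Measurable (divergence F) :=
  (LinearMap.trace ℝ E ∘ₗ ContinuousLinearMap.coeLM ℝ).toContinuousLinearMap.measurable.comp
    (measurable_fderiv ℝ F)

lemma divergence_smul_const_sub {φ : E → ℝ} {x : E} (hφ : DifferentiableAt ℝ φ x) (z : E) :
    divergence (fun y => φ y • (z - y)) x =
      fderiv ℝ φ x (z - x) - Module.finrank ℝ E * φ x := by
  have hsub : HasFDerivAt (fun y : E => z - y) (-ContinuousLinearMap.id ℝ E) x :=
    (hasFDerivAt_id x).const_sub z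
  have hsmul := (hφ.hasFDerivAt.smul hsub).fderiv
  change fderiv ℝ (fun y => φ y • (z - y)) x = _ at hsmul
  rw [divergence, hsmul]
  simp [ContinuousLinearMap.smulRight, LinearMap.trace_smulRight, LinearMap.trace_id]
  ring

end Divergence

namespace Tri

/-- `w` is continuous up to the boundary of the triangle and differentiable inside, with integrable
gradient: the regularity in which the divergence theorem is proved. -/
structure IsW11 (t : Tri) (w : Pt → ℝ) : Prop where
  continuousOn : ContinuousOn w t.closedHull
  differentiableOn : DifferentiableOn ℝ w t.openHull
  integrableOn_fderiv : IntegrableOn (fderiv ℝ w) t.openHull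

variable {t : Tri}

lemma openHull_subset_closedHull (t : Tri) : t.openHull ⊆ t.closedHull := interior_subset

lemma openHull_subset_interior_biUnion {S : Finset Tri} (ht : t ∈ S) :
    t.openHull ⊆ interior (⋃ t ∈ S, t.closedHull) :=
  interior_mono (subset_biUnion_of_mem (u := Tri.closedHull) ht)

lemma isCompact_closedHull (t : Tri) : IsCompact t.closedHull :=
  (toFinite {t.A, t.B, t.C}).isCompact_convexHull ℝ

lemma vertex_mem_closedHull (t : Tri) (i : Fin 3) : t.vertex i ∈ t.closedHull :=
  subset_convexHull ℝ _ (t.range_vertex ▸ mem_range_self i)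

lemma integrableOn_openHull_of_continuousOn {g : Pt → ℝ} (hg : ContinuousOn g t.closedHull) :
    IntegrableOn g t.openHull :=
  (hg.integrableOn_compact t.isCompact_closedHull).mono_set t.openHull_subset_closedHull

lemma add_smul_mem_closedHull {p q : Pt} (hp : p ∈ t.closedHull) (hq : q ∈ t.closedHull) {s : ℝ}
    (hs : s ∈ Icc 0 1) : p + s • (q - p) ∈ t.closedHull :=
  (convex_convexHull ℝ {t.A, t.B, t.C}).add_smul_sub_mem hp hq hs

lemma continuousOn_segment_param {g : Pt → ℝ} (hg : ContinuousOn g t.closedHull) {p q : Pt}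
    (hp : p ∈ t.closedHull) (hq : q ∈ t.closedHull) :
    ContinuousOn (fun s : ℝ => g (p + s • (q - p))) (Icc 0 1) :=
  hg.comp (by fun_prop) fun _ hs => add_smul_mem_closedHull hp hq hs

lemma intervalIntegrable_segment_param {g : Pt → ℝ} (hg : ContinuousOn g t.closedHull) {p q : Pt}
    (hp : p ∈ t.closedHull) (hq : q ∈ t.closedHull) :
    IntervalIntegrable (fun s : ℝ => g (p + s • (q - p))) volume 0 1 :=
  (continuousOn_segment_param hg hp hq).intervalIntegrable_of_Icc zero_le_one

lemma hasDerivAt_par (t : Tri) (y x : ℝ) :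
    HasDerivAt (fun s => t.par (y, s)) (t.B - t.A) x := by
  simpa [par] using (((hasDerivAt_id x).smul_const (t.B - t.A)).const_add t.A).add_const
    (y • (t.C - t.A))

lemma lipschitzWith_par (t : Tri) (y : ℝ) :
    LipschitzWith ‖t.B - t.A‖₊ fun s => t.par (y, s) :=
  lipschitzWith_of_nnnorm_deriv_le (𝕜 := ℝ) (fun x => (t.hasDerivAt_par y x).differentiableAt)
    fun x => by rw [(t.hasDerivAt_par y x).deriv]

lemma IsW11.integrableOn_fderiv_mul_add {w φ : Pt → ℝ} (hw : t.IsW11 w) {L : NNReal}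
    (hφ : LipschitzWith L φ) (v : Pt) :
    IntegrableOn (fun x => fderiv ℝ w x v * φ x + w x * fderiv ℝ φ x v) t.openHull := by
  obtain ⟨M, hM⟩ := t.isCompact_closedHull.exists_bound_of_continuousOn hφ.continuous.continuousOn
  refine Integrable.add ?_ ?_
  · exact (hw.integrableOn_fderiv.apply_continuousLinearMap v).mul_bdd (c := M)
      hφ.continuous.aestronglyMeasurable
      (ae_restrict_of_forall_mem t.measurableSet_openHull
        fun x hx => hM x (t.openHull_subset_closedHull hx))
  · exact (integrableOn_openHull_of_continuousOn hw.continuousOn).mul_bdd (c := L * ‖v‖)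
      (measurable_fderiv_apply_const ℝ φ v).aestronglyMeasurable (ae_of_all _ fun x =>
        (fderiv ℝ φ x).le_of_opNorm_le (norm_fderiv_le_of_lipschitz ℝ hφ) v)

lemma Nondeg.integral_slice (h : t.Nondeg) {w φ : Pt → ℝ} (hw : t.IsW11 w) {L : NNReal}
    (hφ : LipschitzWith L φ) {y : ℝ} (hy : y ∈ Ioo 0 1)
    (hint : IntervalIntegrable (fun x => fderiv ℝ w (t.par (y, x)) (t.B - t.A)) volume 0 (1 - y))
    (hdiff : ∀ᵐ x, DifferentiableAt ℝ φ (t.par (y, x))) :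
    ∫ x in (0 : ℝ)..(1 - y), (fderiv ℝ w (t.par (y, x)) (t.B - t.A) * φ (t.par (y, x)) +
        w (t.par (y, x)) * fderiv ℝ φ (t.par (y, x)) (t.B - t.A)) =
      w (t.par (y, 1 - y)) * φ (t.par (y, 1 - y)) - w (t.par (y, 0)) * φ (t.par (y, 0)) := by
  refine integral_deriv_mul_add_of_lipschitzWith (f := fun x => w (t.par (y, x)))
    (g := fun x => φ (t.par (y, x))) (sub_nonneg.2 hy.2.le) ?_ (fun x hx => ?_) hint
    (hφ.comp (t.lipschitzWith_par y)) ?_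
  · exact hw.continuousOn.comp (t.continuous_par.comp (Continuous.prodMk_right y)).continuousOn
      fun x hx => h.par_mem_closedHull.2 ⟨hy.1.le, hx⟩
  · exact ((hw.differentiableOn _ (h.par_mem_openHull.2 ⟨hy, hx⟩)).differentiableAt
      (isOpen_interior.mem_nhds (h.par_mem_openHull.2 ⟨hy, hx⟩))).hasFDerivAt.comp_hasDerivAt x
      (t.hasDerivAt_par y x)
  · filter_upwards [hdiff] with x hx
    exact hx.hasFDerivAt.comp_hasDerivAt x (t.hasDerivAt_par y x)

lemma Nondeg.integral_fderiv_mul_add (h : t.Nondeg) {w φ : Pt → ℝ} (hw : t.IsW11 w) {L : NNReal}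
    (hφ : LipschitzWith L φ) :
    ∫ x in t.openHull, (fderiv ℝ w x (t.B - t.A) * φ x + w x * fderiv ℝ φ x (t.B - t.A)) =
      |t.cross| * (segAvg (fun x => w x * φ x) t.B t.C - segAvg (fun x => w x * φ x) t.C t.A) := by
  have hwφ : ContinuousOn (fun x => w x * φ x) t.closedHull :=
    hw.continuousOn.mul hφ.continuous.continuousOn
  rw [h.setIntegral_openHull (hw.integrableOn_fderiv_mul_add hφ _), segAvg_comm _ t.C t.A,
    segAvg, segAvg, ← intervalIntegral.integral_sub
      (intervalIntegrable_segment_param (p := t.B) (q := t.C) hwφ (t.vertex_mem_closedHull 1)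
        (t.vertex_mem_closedHull 2))
      (intervalIntegrable_segment_param (p := t.A) (q := t.C) hwφ (t.vertex_mem_closedHull 0)
        (t.vertex_mem_closedHull 2)),
    intervalIntegral.integral_of_le zero_le_one, integral_Ioc_eq_integral_Ioo]
  congr 1
  refine setIntegral_congr_ae measurableSet_Ioo ?_
  filter_upwards [h.ae_ae_par hφ.ae_differentiableAt,
    h.ae_intervalIntegrable_par (hw.integrableOn_fderiv.apply_continuousLinearMap (t.B - t.A))]
    with y hdiff hint hy
  rw [h.integral_slice hw hφ hy (hint hy) hdiff]
  have hBC : t.par (y, 1 - y) = t.B + y • (t.C - t.B) := by simp only [par]; module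
  have hAC : t.par (y, 0) = t.A + y • (t.C - t.A) := by simp only [par]; module
  rw [hBC, hAC]

/-- The triangle with `B` and `C` exchanged, which has the opposite orientation. -/
def swap (t : Tri) : Tri := ⟨t.A, t.C, t.B⟩

/-- The sign of the orientation `A → B → C`. -/
def orient (t : Tri) : ℝ := SignType.sign t.cross

lemma cross_swap (t : Tri) : t.swap.cross = -t.cross := by
  simp only [swap, cross]; ring

lemma openHull_swap (t : Tri) : t.swap.openHull = t.openHull := by
  simp only [openHull, closedHull, swap, pair_comm]

lemma closedHull_swap (t : Tri) : t.swap.closedHull = t.closedHull := by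
  simp only [closedHull, swap, pair_comm]

lemma Nondeg.swap (h : t.Nondeg) : t.swap.Nondeg := by
  rw [Nondeg, t.cross_swap]
  exact neg_ne_zero.2 h

lemma IsW11.swap {w : Pt → ℝ} (hw : t.IsW11 w) : t.swap.IsW11 w where
  continuousOn := t.closedHull_swap ▸ hw.continuousOn
  differentiableOn := t.openHull_swap ▸ hw.differentiableOn
  integrableOn_fderiv := t.openHull_swap ▸ hw.integrableOn_fderiv

lemma Nondeg.integral_fderiv_mul_add_swap (h : t.Nondeg) {w φ : Pt → ℝ} (hw : t.IsW11 w)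
    {L : NNReal} (hφ : LipschitzWith L φ) :
    ∫ x in t.openHull, (fderiv ℝ w x (t.C - t.A) * φ x + w x * fderiv ℝ φ x (t.C - t.A)) =
      |t.cross| * (segAvg (fun x => w x * φ x) t.B t.C - segAvg (fun x => w x * φ x) t.A t.B) := by
  have hswap := h.swap.integral_fderiv_mul_add hw.swap hφ
  rw [t.openHull_swap, t.cross_swap, abs_neg] at hswap
  rw [segAvg_comm _ t.B t.C, segAvg_comm _ t.A t.B]
  exact hswap

lemma IsW11.integrableOn_fderiv_apply {w : Pt → ℝ} {F : Pt → Pt} (hw : t.IsW11 w)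
    (hF : Continuous F) : IntegrableOn (fun x => fderiv ℝ w x (F x)) t.openHull := by
  obtain ⟨M, hM⟩ := t.isCompact_closedHull.exists_bound_of_continuousOn hF.continuousOn
  refine (hw.integrableOn_fderiv.norm.mul_const M).mono'
    (isBoundedBilinearMap_apply.continuous.measurable.comp
      ((measurable_fderiv ℝ w).prodMk hF.measurable)).aestronglyMeasurable
    (ae_restrict_of_forall_mem t.measurableSet_openHull fun x hx => ?_)
  exact (fderiv ℝ w x).le_opNorm_of_le (hM x (t.openHull_subset_closedHull hx))

lemma integrableOn_mul_divergence {w : Pt → ℝ} {F : Pt → Pt} (hw : ContinuousOn w t.closedHull)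
    {L : NNReal} (hF : LipschitzWith L F) :
    IntegrableOn (fun x => w x * divergence F x) t.openHull := by
  obtain ⟨M, hM⟩ := exists_abs_divergence_le hF
  exact (integrableOn_openHull_of_continuousOn hw).mul_bdd
    (measurable_divergence F).aestronglyMeasurable (ae_of_all _ hM)

lemma lipschitzWith_wedge {F : Pt → Pt} {L : NNReal} (hF : LipschitzWith L F) (v : Pt) :
    LipschitzWith (‖wedgeCLM v‖₊ * L) fun x => wedge (F x) v := by
  simpa only [Function.comp_def, wedgeCLM_apply] using (wedgeCLM v).lipschitz.comp hF

lemma fderiv_wedge {F : Pt → Pt} {x : Pt} (hF : DifferentiableAt ℝ F x) (v a : Pt) :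
    fderiv ℝ (fun y => wedge (F y) v) x a = wedge (fderiv ℝ F x a) v := by
  have := ((wedgeCLM v).hasFDerivAt.comp x hF.hasFDerivAt).fderiv
  simp only [Function.comp_def, wedgeCLM_apply] at this
  simp [this]

lemma Nondeg.cross_mul_integral_divergence (h : t.Nondeg) {w : Pt → ℝ} {F : Pt → Pt}
    (hw : t.IsW11 w) {L : NNReal} (hF : LipschitzWith L F) :
    t.cross * ∫ x in t.openHull, (fderiv ℝ w x (F x) + w x * divergence F x) =
      |t.cross| * (segAvg (fun x => w x * wedge (F x) (t.C - t.A)) t.B t.C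
        - segAvg (fun x => w x * wedge (F x) (t.C - t.A)) t.C t.A
        - (segAvg (fun x => w x * wedge (F x) (t.B - t.A)) t.B t.C
        - segAvg (fun x => w x * wedge (F x) (t.B - t.A)) t.A t.B)) := by
  rw [mul_sub, ← h.integral_fderiv_mul_add hw (lipschitzWith_wedge hF _),
    ← h.integral_fderiv_mul_add_swap hw (lipschitzWith_wedge hF _), ← integral_const_mul,
    ← integral_sub (hw.integrableOn_fderiv_mul_add (lipschitzWith_wedge hF _) _)
      (hw.integrableOn_fderiv_mul_add (lipschitzWith_wedge hF _) _)]
  refine integral_congr_ae (ae_restrict_of_ae ?_)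
  filter_upwards [hF.ae_differentiableAt] with x hx
  have hgrad := congrArg (fderiv ℝ w x)
    (wedge_smul_add_wedge_smul (F x) (t.B - t.A) (t.C - t.A))
  have htrace := wedge_map_add_wedge_map (fderiv ℝ F x) (t.B - t.A) (t.C - t.A)
  rw [map_add, map_smul, map_smul, map_smul, smul_eq_mul, smul_eq_mul, smul_eq_mul,
    wedge_swap (F x) (t.B - t.A)] at hgrad
  rw [wedge_swap _ (t.B - t.A), ContinuousLinearMap.coe_coe] at htrace
  rw [divergence, fderiv_wedge hx, fderiv_wedge hx, t.cross_eq_wedge]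
  linear_combination -hgrad - w x * htrace

lemma continuousOn_mul_wedge {w : Pt → ℝ} {F : Pt → Pt} (hw : ContinuousOn w t.closedHull)
    (hF : Continuous F) (v : Pt) : ContinuousOn (fun x => w x * wedge (F x) v) t.closedHull := by
  simp only [← wedgeCLM_apply]
  exact hw.mul ((wedgeCLM v).continuous.comp hF).continuousOn

theorem Nondeg.integral_mul_divergence (h : t.Nondeg) {w : Pt → ℝ} {F : Pt → Pt}
    (hw : t.IsW11 w) {L : NNReal} (hF : LipschitzWith L F) :
    ∫ x in t.openHull, w x * divergence F x =
      t.orient * ∑ i, segAvg (fun x => w x * wedge (F x) (t.side i)) (t.vertex i) (t.vertex (i + 1))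
        - ∫ x in t.openHull, fderiv ℝ w x (F x) := by
  have hBC : segAvg (fun x => w x * wedge (F x) (t.C - t.B)) t.B t.C =
      segAvg (fun x => w x * wedge (F x) (t.C - t.A)) t.B t.C -
        segAvg (fun x => w x * wedge (F x) (t.B - t.A)) t.B t.C := by
    unfold segAvg
    rw [← intervalIntegral.integral_sub]
    · congr 1 with s
      simp only [wedge, PiLp.sub_apply]; ring
    all_goals
      exact intervalIntegrable_segment_param
        (continuousOn_mul_wedge hw.continuousOn hF.continuous _)
        (t.vertex_mem_closedHull 1) (t.vertex_mem_closedHull 2)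
  have hCA : segAvg (fun x => w x * wedge (F x) (t.A - t.C)) t.C t.A =
      -segAvg (fun x => w x * wedge (F x) (t.C - t.A)) t.C t.A := by
    unfold segAvg
    rw [← intervalIntegral.integral_neg]
    congr 1 with s
    simp only [wedge, PiLp.sub_apply]; ring
  have hmain := h.cross_mul_integral_divergence hw hF
  rw [integral_add (hw.integrableOn_fderiv_apply hF.continuous)
    (integrableOn_mul_divergence hw.continuousOn hF), ← sign_mul_self] at hmain
  have hsum : ∑ i, segAvg (fun x => w x * wedge (F x) (t.side i)) (t.vertex i) (t.vertex (i + 1)) =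
      segAvg (fun x => w x * wedge (F x) (t.B - t.A)) t.A t.B
      + segAvg (fun x => w x * wedge (F x) (t.C - t.B)) t.B t.C
      + segAvg (fun x => w x * wedge (F x) (t.A - t.C)) t.C t.A := Fin.sum_univ_three _
  rw [hsum, hBC, hCA, orient]
  refine mul_left_cancel₀ h ?_
  linear_combination hmain

lemma wedge_sub_vertex_side (t : Tri) (i j : Fin 3) (s : ℝ) :
    wedge (t.vertex j + s • (t.vertex (j + 1) - t.vertex j) - t.vertex (i + 2)) (t.side j) =
      if j = i then t.cross else 0 := by
  fin_cases i <;> fin_cases j <;> simp [side, vertex, wedge, cross] <;> ring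

lemma Nondeg.abs_cross_mul_segAvg (h : t.Nondeg) {w : Pt → ℝ} (hw : t.IsW11 w) (i : Fin 3) :
    |t.cross| * segAvg w (t.vertex i) (t.vertex (i + 1)) =
      2 * (∫ x in t.openHull, w x) + ∫ x in t.openHull, fderiv ℝ w x (x - t.vertex (i + 2)) := by
  have hside (j : Fin 3) :
      segAvg (fun x => w x * wedge (x - t.vertex (i + 2)) (t.side j)) (t.vertex j)
        (t.vertex (j + 1)) =
      if j = i then segAvg w (t.vertex i) (t.vertex (i + 1)) * t.cross else 0 := by
    simp only [segAvg, wedge_sub_vertex_side]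
    split_ifs with hji
    · rw [hji, intervalIntegral.integral_mul_const]
    · simp only [mul_zero, intervalIntegral.integral_zero]
  have hdiv (x : Pt) : divergence (fun y => y - t.vertex (i + 2)) x = 2 := by
    rw [divergence, fderiv_sub_const, fderiv_fun_id]
    simp
  have hmain := h.integral_mul_divergence hw (F := fun x => x - t.vertex (i + 2))
    (IsometryEquiv.subRight _).isometry.lipschitz
  simp only [hdiv, hside, Finset.sum_ite_eq', Finset.mem_univ, if_true, integral_mul_const,
    orient] at hmain
  rw [← sign_mul_self]
  linear_combination -hmain

/-- The regularity required of a piecewise `H¹` function on one triangle. -/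
structure IsH1 (t : Tri) (u : Pt → ℝ) : Prop where
  continuousOn : ContinuousOn u t.closedHull
  differentiableOn : DifferentiableOn ℝ u t.openHull
  integrableOn_sq_norm_fderiv : IntegrableOn (fun x => ‖fderiv ℝ u x‖ ^ 2) t.openHull

/-- The squared `H¹` norm of `u` on the triangle. -/
def energy (t : Tri) (u : Pt → ℝ) : ℝ := ∫ x in t.openHull, (u x ^ 2 + ‖fderiv ℝ u x‖ ^ 2)

lemma energy_nonneg (t : Tri) (u : Pt → ℝ) : 0 ≤ t.energy u :=
  integral_nonneg fun _ => by positivity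

variable {u : Pt → ℝ}

lemma integrableOn_sq (hu : ContinuousOn u t.closedHull) :
    IntegrableOn (fun x => u x ^ 2) t.openHull :=
  integrableOn_openHull_of_continuousOn (hu.pow 2)

lemma IsH1.integrableOn_energy (hu : t.IsH1 u) :
    IntegrableOn (fun x => u x ^ 2 + ‖fderiv ℝ u x‖ ^ 2) t.openHull :=
  (integrableOn_sq hu.continuousOn).add hu.integrableOn_sq_norm_fderiv

lemma IsH1.norm_fderiv_sq_le (hu : t.IsH1 u) {x : Pt} (hx : x ∈ t.openHull) :
    ‖fderiv ℝ (fun y => u y ^ 2) x‖ ≤ u x ^ 2 + ‖fderiv ℝ u x‖ ^ 2 := by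
  have hdiff := (hu.differentiableOn x hx).differentiableAt (isOpen_interior.mem_nhds hx)
  rw [fderiv_fun_pow 2 hdiff, norm_smul]
  have := two_mul_le_add_sq |u x| ‖fderiv ℝ u x‖
  simpa [abs_mul] using this

lemma IsH1.isW11_sq (hu : t.IsH1 u) : t.IsW11 fun x => u x ^ 2 where
  continuousOn := hu.continuousOn.pow 2
  differentiableOn := hu.differentiableOn.pow 2
  integrableOn_fderiv := hu.integrableOn_energy.mono' (measurable_fderiv ℝ _).aestronglyMeasurable
    (ae_restrict_of_forall_mem t.measurableSet_openHull fun _ => hu.norm_fderiv_sq_le)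

lemma IsH1.abs_integral_fderiv_sq_le (hu : t.IsH1 u) {F : Pt → Pt} {M : ℝ}
    (hFM : ∀ x ∈ t.openHull, ‖F x‖ ≤ M) :
    |∫ x in t.openHull, fderiv ℝ (fun y => u y ^ 2) x (F x)| ≤ M * t.energy u := by
  rw [energy, ← integral_const_mul, ← Real.norm_eq_abs]
  refine norm_integral_le_of_norm_le (hu.integrableOn_energy.const_mul M)
    (ae_restrict_of_forall_mem t.measurableSet_openHull fun x hx => ?_)
  rw [mul_comm]
  exact ((fderiv ℝ (fun y => u y ^ 2) x).le_opNorm _).trans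
    (mul_le_mul (hu.norm_fderiv_sq_le hx) (hFM x hx) (norm_nonneg _) (by positivity))

lemma IsH1.abs_cross_mul_segAvg_sq_le (hu : t.IsH1 u) (h : t.Nondeg) {D : ℝ}
    (hD : ∀ x ∈ t.closedHull, ∀ y ∈ t.closedHull, dist x y ≤ D) (i : Fin 3) :
    |t.cross| * segAvg (fun x => u x ^ 2) (t.vertex i) (t.vertex (i + 1)) ≤
      (2 + D) * t.energy u := by
  have hsq : ∫ x in t.openHull, u x ^ 2 ≤ t.energy u :=
    integral_mono (integrableOn_sq hu.continuousOn) hu.integrableOn_energy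
      fun x => le_add_of_nonneg_right (by positivity)
  have hgrad := hu.abs_integral_fderiv_sq_le (F := fun x => x - t.vertex (i + 2)) fun x hx =>
    (dist_eq_norm x _).symm.trans_le
      (hD x (t.openHull_subset_closedHull hx) _ (t.vertex_mem_closedHull _))
  rw [h.abs_cross_mul_segAvg hu.isW11_sq]
  linarith [le_abs_self (∫ x in t.openHull, fderiv ℝ (fun y => u y ^ 2) x (x - t.vertex (i + 2)))]

lemma cross_eq_wedge_side (t : Tri) (i : Fin 3) :
    t.cross = wedge (t.side (i + 1)) (t.side (i + 2)) := by
  fin_cases i <;> simp [side, vertex, wedge, cross] <;> ring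

lemma shapeReg_eq (t : Tri) :
    t.shapeReg = (∏ i, ‖t.side i‖) * (∑ i, ‖t.side i‖) / (2 * t.cross ^ 2) := by
  have hc : t.lc = ‖t.side 0‖ := dist_eq_norm' _ _
  have ha : t.la = ‖t.side 1‖ := dist_eq_norm' _ _
  have hb : t.lb = ‖t.side 2‖ := dist_eq_norm _ _
  rw [shapeReg, circumradius, inradius, area, ha, hb, hc, div_div_eq_mul_div, div_mul_eq_mul_div,
    div_div, Fin.prod_univ_three, Fin.sum_univ_three, ← sq_abs t.cross]
  congr 1 <;> ring

lemma Nondeg.sq_norm_side_le (h : t.Nondeg) (i : Fin 3) :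
    ‖t.side i‖ ^ 2 ≤ 2 * t.shapeReg * |t.cross| := by
  have hcross : 0 < |t.cross| := abs_pos.2 h
  have hprod : ∏ j, ‖t.side j‖ = ‖t.side i‖ * (‖t.side (i + 1)‖ * ‖t.side (i + 2)‖) := by
    rw [Fin.prod_univ_three]
    fin_cases i <;> simp <;> ring
  refine le_of_mul_le_mul_right ?_ hcross
  calc ‖t.side i‖ ^ 2 * |t.cross|
    _ ≤ ‖t.side i‖ ^ 2 * (‖t.side (i + 1)‖ * ‖t.side (i + 2)‖) := by
        gcongr
        exact t.cross_eq_wedge_side i ▸ abs_wedge_le _ _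
    _ = (∏ j, ‖t.side j‖) * ‖t.side i‖ := by rw [hprod]; ring
    _ ≤ (∏ j, ‖t.side j‖) * ∑ j, ‖t.side j‖ := by
        gcongr
        exact Finset.single_le_sum (f := fun j => ‖t.side j‖) (fun _ _ => norm_nonneg _)
          (Finset.mem_univ i)
    _ = 2 * t.shapeReg * |t.cross| * |t.cross| := by
        rw [shapeReg_eq, mul_assoc, abs_mul_abs_self]
        field_simp [show t.cross ≠ 0 from h]

lemma shapeReg_nonneg (t : Tri) : 0 ≤ t.shapeReg := by
  rw [shapeReg_eq]; positivity

/-- The mean of `u²` over the `i`-th side, scaled by the squared length of the side. -/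
def traceSq (t : Tri) (u : Pt → ℝ) (i : Fin 3) : ℝ :=
  ‖t.side i‖ ^ 2 * segAvg (fun x => u x ^ 2) (t.vertex i) (t.vertex (i + 1))

lemma traceSq_nonneg (t : Tri) (u : Pt → ℝ) (i : Fin 3) : 0 ≤ t.traceSq u i :=
  mul_nonneg (sq_nonneg _) (segAvg_sq_nonneg _ _ _)

lemma IsH1.traceSq_le {u : Pt → ℝ} (hu : t.IsH1 u) (h : t.Nondeg) {D : ℝ}
    (hD : ∀ x ∈ t.closedHull, ∀ y ∈ t.closedHull, dist x y ≤ D) (i : Fin 3) :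
    t.traceSq u i ≤ 2 * t.shapeReg * (2 + D) * t.energy u :=
  calc
    _ ≤ 2 * t.shapeReg * |t.cross| * segAvg (fun x => u x ^ 2) (t.vertex i) (t.vertex (i + 1)) :=
        mul_le_mul_of_nonneg_right (h.sq_norm_side_le i) (segAvg_sq_nonneg _ _ _)
    _ ≤ 2 * t.shapeReg * ((2 + D) * t.energy u) := by
        rw [mul_assoc]
        exact mul_le_mul_of_nonneg_left (hu.abs_cross_mul_segAvg_sq_le h hD i)
          (mul_nonneg zero_le_two t.shapeReg_nonneg)
    _ = _ := by ring

end Tri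

lemma SameEdge.symm {e e' : Pt × Pt} (h : SameEdge e e') : SameEdge e' e := by
  rcases h with rfl | rfl
  exacts [Or.inl rfl, Or.inr rfl]

lemma SameEdge.trans {e e' e'' : Pt × Pt} (h : SameEdge e e') (h' : SameEdge e' e'') :
    SameEdge e e'' := by
  rcases h with rfl | rfl <;> rcases h' with rfl | rfl
  exacts [Or.inl rfl, Or.inr rfl, Or.inr rfl, Or.inl rfl]

lemma SameEdge.segAvg_eq {e e' : Pt × Pt} (h : SameEdge e e') (g : Pt → ℝ) :
    segAvg g e'.1 e'.2 = segAvg g e.1 e.2 := by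
  rcases h with rfl | rfl
  exacts [rfl, segAvg_comm _ _ _]

lemma SameEdge.midpoint_eq {e e' : Pt × Pt} (h : SameEdge e e') :
    midpoint ℝ e'.1 e'.2 = midpoint ℝ e.1 e.2 := by
  rcases h with rfl | rfl
  exacts [rfl, midpoint_comm _ _]

lemma SameEdge.sub_eq_or_eq_neg {e e' : Pt × Pt} (h : SameEdge e e') :
    e'.2 - e'.1 = e.2 - e.1 ∨ e'.2 - e'.1 = -(e.2 - e.1) := by
  rcases h with rfl | rfl
  exacts [Or.inl rfl, Or.inr (neg_sub _ _).symm]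

namespace Tri

variable {t t' : Tri}

/-- The endpoints of the `i`-th side. -/
def edge (t : Tri) (i : Fin 3) : Pt × Pt := (t.vertex i, t.vertex (i + 1))

lemma edgeList_eq (t : Tri) : t.edgeList = List.ofFn t.edge := rfl

lemma mem_edgeList {e : Pt × Pt} : e ∈ t.edgeList ↔ ∃ i, t.edge i = e := by
  rw [edgeList_eq, List.mem_ofFn]

lemma Nondeg.edge_injective (h : t.Nondeg) {i j : Fin 3} (hij : SameEdge (t.edge i) (t.edge j)) :
    i = j := by
  have hinj := h.affineIndependent.injective
  rcases hij with heq | heq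
  · exact hinj (congrArg Prod.fst heq).symm
  · have h₁ : j = i + 1 := hinj (congrArg Prod.fst heq)
    have h₂ : j + 1 = i := hinj (congrArg Prod.snd heq)
    clear heq
    fin_cases i <;> simp_all

/-- The `i`-th side, oriented so that the triangle lies to its left. -/
def ccwSide (t : Tri) (i : Fin 3) : Pt := t.orient • t.side i

lemma Nondeg.abs_orient (h : t.Nondeg) : |t.orient| = 1 := by
  rcases lt_or_gt_of_ne h with hneg | hpos
  · simp [orient, sign_neg hneg]
  · simp [orient, sign_pos hpos]

lemma Nondeg.side_ne_zero (h : t.Nondeg) (i : Fin 3) : t.side i ≠ 0 :=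
  sub_ne_zero.2 (h.affineIndependent.injective.ne (by simp))

lemma Nondeg.norm_ccwSide (h : t.Nondeg) (i : Fin 3) : ‖t.ccwSide i‖ = ‖t.side i‖ := by
  rw [ccwSide, norm_smul, Real.norm_eq_abs, h.abs_orient, one_mul]

lemma Nondeg.eventually_add_smul_mem_openHull (h : t.Nondeg) (i : Fin 3) {v : Pt}
    (hv : 0 < t.cross * wedge (t.side i) v) :
    ∀ᶠ r : ℝ in nhdsWithin 0 (Ioi 0),
      midpoint ℝ (t.edge i).1 (t.edge i).2 + r • v ∈ t.openHull := by
  simp only [h.openHull_eq, mem_ofPred_eq, Filter.eventually_all]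
  intro k
  by_cases hk : k = i + 2
  · filter_upwards [self_mem_nhdsWithin] with r hr
    have hmid : midpoint ℝ (t.edge i).1 (t.edge i).2 + r • v - t.vertex i =
        (1 / 2 : ℝ) • (t.vertex (i + 1) - t.vertex i) + r • v := by
      rw [edge, midpoint_eq_smul_add, invOf_eq_inv]
      module
    have hcoord := h.cross_mul_coord i (midpoint ℝ (t.edge i).1 (t.edge i).2 + r • v)
    rw [hmid, wedge_add_right, wedge_smul_right, wedge_smul_right, wedge_vertex_sub_side,
      if_neg (by simp), mul_zero, zero_add] at hcoord
    rw [hk]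
    refine pos_of_mul_pos_right (a := t.cross ^ 2) ?_ (sq_nonneg _)
    rw [sq, mul_assoc, hcoord, mul_left_comm]
    exact mul_pos hr hv
  · have hcont : Continuous fun r : ℝ =>
        h.basis.coord k (midpoint ℝ (t.edge i).1 (t.edge i).2 + r • v) :=
      (h.basis.coord k).continuous_of_finiteDimensional.comp (by fun_prop)
    refine (hcont.tendsto 0).eventually (lt_mem_nhds ?_) |>.filter_mono nhdsWithin_le_nhds
    rw [zero_smul, add_zero, AffineMap.map_midpoint, edge,
      ← h.basis_apply, ← h.basis_apply, h.basis.coord_apply, h.basis.coord_apply]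
    have hki : k = i ∨ k = i + 1 := by fin_cases i <;> fin_cases k <;> simp_all
    rcases hki with rfl | rfl <;> simp [midpoint_eq_smul_add]

lemma Nondeg.cross_mul_wedge_nonpos (h : t.Nondeg) (h' : t'.Nondeg)
    (hdisj : t.openHull ∩ t'.openHull = ∅) {i j : Fin 3} (he : SameEdge (t.edge i) (t'.edge j)) :
    t'.cross * wedge (t'.side j) (t.vertex (i + 2) - t.vertex i) ≤ 0 := by
  by_contra! hin'
  have hin : 0 < t.cross * wedge (t.side i) (t.vertex (i + 2) - t.vertex i) := by
    rw [wedge_vertex_sub_side, if_pos rfl]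
    exact mul_self_pos.2 h
  obtain ⟨r, hr, hr'⟩ := ((h.eventually_add_smul_mem_openHull i hin).and
    (h'.eventually_add_smul_mem_openHull j hin')).exists
  rw [he.midpoint_eq] at hr'
  exact hdisj.subset ⟨hr, hr'⟩

lemma orient_mul_orient (t t' : Tri) :
    t'.orient * t.orient = SignType.sign (t'.cross * t.cross) := by
  simp [orient, sign_mul]

lemma Nondeg.ccwSide_eq_neg (h : t.Nondeg) (h' : t'.Nondeg) (hdisj : t.openHull ∩ t'.openHull = ∅)
    {i j : Fin 3} (he : SameEdge (t.edge i) (t'.edge j)) : t'.ccwSide j = -t.ccwSide i := by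
  have hself : t.orient * t.orient = 1 := by rw [← abs_mul_abs_self, h.abs_orient, one_mul]
  have hle := h.cross_mul_wedge_nonpos h' hdisj he
  have hmul := t.orient_mul_orient t'
  have hside : t'.side j = t.side i ∨ t'.side j = -t.side i := he.sub_eq_or_eq_neg
  rcases hside with hside | hside <;> rw [hside] at hle
  · rw [wedge_vertex_sub_side, if_pos rfl] at hle
    rw [sign_neg (lt_of_le_of_ne hle (mul_ne_zero h' h)), SignType.coe_neg_one] at hmul
    rw [ccwSide, ccwSide, hside, ← neg_smul]
    congr 1
    linear_combination t.orient * hmul - t'.orient * hself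
  · rw [wedge_neg_left, wedge_vertex_sub_side, if_pos rfl, mul_neg, neg_nonpos] at hle
    rw [sign_pos (lt_of_le_of_ne hle (mul_ne_zero h' h).symm), SignType.coe_one] at hmul
    rw [ccwSide, ccwSide, hside, smul_neg]
    congr 2
    linear_combination t.orient * hmul - t'.orient * hself

end Tri

lemma two_mul_sum_le_of_symmetric_matching {ι : Type*} (s : Finset ι) {R : ι → ι → Prop}
    (hsymm : ∀ p q, R p q → R q p)
    (hunique : ∀ p ∈ s, ∀ q ∈ s, ∀ q' ∈ s, R p q → R p q' → q = q') {a : ι → ℝ} {b : ι → ι → ℝ}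
    (hsingle : ∀ p ∈ s, (∀ q ∈ s, ¬R p q) → a p ≤ 0)
    (hpair : ∀ p ∈ s, ∀ q ∈ s, R p q → a p + a q ≤ b p q) :
    2 * ∑ p ∈ s, a p ≤ ∑ p ∈ s, ∑ q ∈ s, if R p q then b p q else 0 := by
  have hpartner (p : ι) (hp : p ∈ s) : a p ≤ ∑ q ∈ s, if R p q then a p else 0 := by
    by_cases hex : ∃ q ∈ s, R p q
    · obtain ⟨q, hq, hpq⟩ := hex
      rw [Finset.sum_eq_single_of_mem q hq
        fun q' hq' hne => if_neg fun hpq' => hne (hunique p hp q' hq' q hq hpq' hpq), if_pos hpq]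
    · push Not at hex
      rw [Finset.sum_eq_zero fun q hq => if_neg (hex q hq)]
      exact hsingle p hp hex
  have hflip : ∑ p ∈ s, ∑ q ∈ s, (if R p q then a p else 0) =
      ∑ p ∈ s, ∑ q ∈ s, if R p q then a q else 0 := by
    rw [Finset.sum_comm]
    simp only [show ∀ p q, R p q ↔ R q p from fun p q => ⟨hsymm p q, hsymm q p⟩]
  calc 2 * ∑ p ∈ s, a p
    _ ≤ 2 * ∑ p ∈ s, ∑ q ∈ s, if R p q then a p else 0 := by gcongr with p hp; exact hpartner p hp
    _ = ∑ p ∈ s, ∑ q ∈ s, ((if R p q then a p else 0) + if R p q then a q else 0) := by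
        simp only [Finset.sum_add_distrib, ← hflip]
        ring
    _ ≤ ∑ p ∈ s, ∑ q ∈ s, if R p q then b p q else 0 := by
        gcongr with p hp q hq
        split_ifs with hpq
        exacts [hpair p hp q hq hpq, (add_zero 0).le]

lemma sq_sub_sq_mul_le {a b c e M : ℝ} (hM : 0 ≤ M) (hc : |c| ≤ M * e) :
    (a ^ 2 - b ^ 2) * c ≤ M * (e ^ 2 * a ^ 2 + e ^ 2 * b ^ 2 + (a - b) ^ 2 / 2) := by
  have hyoung : |a ^ 2 - b ^ 2| * e ≤ e ^ 2 * a ^ 2 + e ^ 2 * b ^ 2 + (a - b) ^ 2 / 2 := by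
    rcases abs_cases (a ^ 2 - b ^ 2) with ⟨habs, -⟩ | ⟨habs, -⟩ <;> rw [habs] <;>
      nlinarith [sq_nonneg (a - b - e * (a + b)), sq_nonneg (a - b + e * (a + b)),
        sq_nonneg (e * (a - b))]
  calc (a ^ 2 - b ^ 2) * c
    _ ≤ |a ^ 2 - b ^ 2| * |c| := (le_abs_self _).trans_eq (abs_mul _ _)
    _ ≤ |a ^ 2 - b ^ 2| * (M * e) := by gcongr
    _ = M * (|a ^ 2 - b ^ 2| * e) := by ring
    _ ≤ _ := by gcongr

lemma integral_sq_mul_sub_le {f g φ : ℝ → ℝ} {x y M e : ℝ} (hxy : x ≤ y)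
    (hf : ContinuousOn f (Icc x y)) (hg : ContinuousOn g (Icc x y)) (hφ : ContinuousOn φ (Icc x y))
    (hM : 0 ≤ M) (hφM : ∀ s ∈ Icc x y, |φ s| ≤ M * e) :
    (∫ s in x..y, f s ^ 2 * φ s) - (∫ s in x..y, g s ^ 2 * φ s) ≤
      M * (e ^ 2 * (∫ s in x..y, f s ^ 2) + e ^ 2 * (∫ s in x..y, g s ^ 2) +
        (∫ s in x..y, (f s - g s) ^ 2) / 2) := by
  have hint {k : ℝ → ℝ} (hk : ContinuousOn k (Icc x y)) : IntervalIntegrable k volume x y :=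
    hk.intervalIntegrable_of_Icc hxy
  rw [← intervalIntegral.integral_sub (hint (by fun_prop)) (hint (by fun_prop)),
    ← intervalIntegral.integral_const_mul, ← intervalIntegral.integral_const_mul,
    ← intervalIntegral.integral_div,
    ← intervalIntegral.integral_add (hint (by fun_prop)) (hint (by fun_prop)),
    ← intervalIntegral.integral_add (hint (by fun_prop)) (hint (by fun_prop)),
    ← intervalIntegral.integral_const_mul]
  refine intervalIntegral.integral_mono_on hxy (hint (by fun_prop)) (hint (by fun_prop))
    fun s hs => ?_
  rw [← sub_mul]
  exact sq_sub_sq_mul_le hM (hφM s hs)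

namespace Tri

variable {t t' : Tri} {u u' : Pt → ℝ} {F : Pt → Pt}

/-- The flux of `u² F` through the `i`-th side of the triangle, out of the triangle. -/
def flux (t : Tri) (u : Pt → ℝ) (F : Pt → Pt) (i : Fin 3) : ℝ :=
  segAvg (fun x => u x ^ 2 * wedge (F x) (t.ccwSide i)) (t.vertex i) (t.vertex (i + 1))

lemma IsH1.integral_sq_mul_divergence_le (hu : t.IsH1 u) (h : t.Nondeg) {L : NNReal} {M : ℝ}
    (hF : LipschitzWith L F) (hM : ∀ x, ‖F x‖ ≤ M) :
    ∫ x in t.openHull, u x ^ 2 * divergence F x ≤ ∑ i, t.flux u F i + M * t.energy u := by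
  have hflux (i : Fin 3) : t.flux u F i = t.orient *
      segAvg (fun x => u x ^ 2 * wedge (F x) (t.side i)) (t.vertex i) (t.vertex (i + 1)) := by
    simp only [flux, segAvg, ccwSide, wedge_smul_right, mul_left_comm _ t.orient,
      intervalIntegral.integral_const_mul]
  rw [h.integral_mul_divergence hu.isW11_sq hF, Finset.mul_sum]
  simp only [← hflux]
  linarith [neg_abs_le (∫ x in t.openHull, fderiv ℝ (fun y => u y ^ 2) x (F x)),
    hu.abs_integral_fderiv_sq_le (F := F) (M := M) fun x _ => hM x]

lemma flux_eq_zero {i : Fin 3} (hF : ∀ x ∈ segment ℝ (t.edge i).1 (t.edge i).2, F x = 0) :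
    t.flux u F i = 0 := by
  refine intervalIntegral.integral_zero_ae (ae_of_all _ fun s hs => ?_)
  rw [uIoc_of_le zero_le_one] at hs
  have hmem : t.vertex i + s • (t.vertex (i + 1) - t.vertex i) ∈
      segment ℝ (t.edge i).1 (t.edge i).2 := by
    rw [segment_eq_image']
    exact mem_image_of_mem _ (Ioc_subset_Icc_self hs)
  simp [hF _ hmem, wedge]

lemma traceSq_eq_of_sameEdge {i j : Fin 3} (he : SameEdge (t.edge i) (t'.edge j)) :
    t'.traceSq u j =
      ‖t.side i‖ ^ 2 * segAvg (fun x => u x ^ 2) (t.vertex i) (t.vertex (i + 1)) := by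
  have hside : t'.side j = t.side i ∨ t'.side j = -t.side i := he.sub_eq_or_eq_neg
  have hnorm : ‖t'.side j‖ = ‖t.side i‖ := by
    rcases hside with hside | hside <;> rw [hside]
    rw [norm_neg]
  rw [traceSq, hnorm]
  exact congrArg _ (he.segAvg_eq _)

lemma Nondeg.flux_eq_of_sameEdge (h : t.Nondeg) (h' : t'.Nondeg)
    (hdisj : t.openHull ∩ t'.openHull = ∅) {i j : Fin 3} (he : SameEdge (t.edge i) (t'.edge j)) :
    t'.flux u F j =
      -segAvg (fun x => u x ^ 2 * wedge (F x) (t.ccwSide i)) (t.vertex i) (t.vertex (i + 1)) := by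
  rw [flux, h.ccwSide_eq_neg h' hdisj he]
  refine (he.segAvg_eq _).trans ?_
  rw [segAvg, ← neg_one_mul, edge, segAvg, ← intervalIntegral.integral_const_mul]
  congr 1 with s
  rw [← neg_one_smul ℝ, wedge_smul_right]
  ring

lemma Nondeg.flux_add_flux_le (h : t.Nondeg) (h' : t'.Nondeg)
    (hdisj : t.openHull ∩ t'.openHull = ∅) {i j : Fin 3} (he : SameEdge (t.edge i) (t'.edge j))
    (hu : ContinuousOn u t.closedHull) (hu' : ContinuousOn u' t'.closedHull) (hF : Continuous F)
    {M : ℝ} (hM : ∀ x, ‖F x‖ ≤ M) :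
    t.flux u F i + t'.flux u' F j ≤ M * (t.traceSq u i + t'.traceSq u' j +
      segAvg (fun x => (u x - u' x) ^ 2) (t.vertex i) (t.vertex (i + 1)) / 2) := by
  have hmem : t.vertex i ∈ t'.closedHull ∧ t.vertex (i + 1) ∈ t'.closedHull := by
    rcases he.symm with heq | heq <;> rw [edge, edge, Prod.mk.injEq] at heq <;> rw [heq.1, heq.2]
    exacts [⟨t'.vertex_mem_closedHull j, t'.vertex_mem_closedHull (j + 1)⟩,
      ⟨t'.vertex_mem_closedHull (j + 1), t'.vertex_mem_closedHull j⟩]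
  rw [h.flux_eq_of_sameEdge h' hdisj he, traceSq_eq_of_sameEdge he, ← sub_eq_add_neg]
  have hwedge : Continuous fun x => wedge (F x) (t.ccwSide i) := by
    simp only [← wedgeCLM_apply]
    fun_prop
  refine integral_sq_mul_sub_le zero_le_one
    (continuousOn_segment_param hu (t.vertex_mem_closedHull i) (t.vertex_mem_closedHull (i + 1)))
    (continuousOn_segment_param hu' hmem.1 hmem.2)
    (hwedge.comp (by fun_prop)).continuousOn ((norm_nonneg _).trans (hM 0)) fun s _ => ?_
  rw [← h.norm_ccwSide]
  exact (abs_wedge_le _ _).trans (mul_le_mul_of_nonneg_right (hM _) (norm_nonneg _))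

end Tri

namespace Triangulation

variable {Ω : Set Pt} (T : Triangulation Ω)

/-- The sides of all triangles, so that each interior edge is listed twice. -/
def sides : Finset (Tri × Fin 3) := T.tris ×ˢ Finset.univ

/-- Two sides of distinct triangles occupy the same edge. -/
def Matched (p q : Tri × Fin 3) : Prop := q.1 ≠ p.1 ∧ SameEdge (p.1.edge p.2) (q.1.edge q.2)

lemma Matched.symm {p q : Tri × Fin 3} (h : Matched p q) : Matched q p := ⟨h.1.symm, h.2.symm⟩

variable {T}

lemma nondeg_of_mem_sides {p : Tri × Fin 3} (hp : p ∈ T.sides) : p.1.Nondeg :=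
  T.nondeg _ (Finset.mem_product.1 hp).1

lemma Matched.disjoint_openHull {p q : Tri × Fin 3} (h : Matched p q) (hp : p ∈ T.sides)
    (hq : q ∈ T.sides) : p.1.openHull ∩ q.1.openHull = ∅ :=
  T.disj _ (Finset.mem_product.1 hp).1 _ (Finset.mem_product.1 hq).1 h.1.symm

lemma Matched.ccwSide_eq_neg {p q : Tri × Fin 3} (h : Matched p q) (hp : p ∈ T.sides)
    (hq : q ∈ T.sides) : q.1.ccwSide q.2 = -p.1.ccwSide p.2 :=
  (nondeg_of_mem_sides hp).ccwSide_eq_neg (nondeg_of_mem_sides hq) (h.disjoint_openHull hp hq) h.2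

lemma Matched.right_unique {p q q' : Tri × Fin 3} (hp : p ∈ T.sides) (hq : q ∈ T.sides)
    (hq' : q' ∈ T.sides) (h : Matched p q) (h' : Matched p q') : q = q' := by
  have hsame : SameEdge (q.1.edge q.2) (q'.1.edge q'.2) := h.2.symm.trans h'.2
  by_cases htri : q'.1 = q.1
  · refine Prod.ext htri.symm ((nondeg_of_mem_sides hq).edge_injective ?_)
    rwa [htri] at hsame
  -- Three triangles at one edge would give three pairwise opposite orientations of it.
  · have := IsAddTorsionFree.of_isTorsionFree ℝ Pt
    have hneg := Matched.ccwSide_eq_neg ⟨htri, hsame⟩ hq hq'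
    rw [h.ccwSide_eq_neg hp hq, h'.ccwSide_eq_neg hp hq', neg_neg, neg_eq_self] at hneg
    have hnorm := (nondeg_of_mem_sides hp).norm_ccwSide p.2
    rw [hneg, norm_zero, eq_comm, norm_eq_zero] at hnorm
    exact absurd hnorm ((nondeg_of_mem_sides hp).side_ne_zero _)

lemma segment_subset_frontier_of_forall_not_matched {p : Tri × Fin 3} (hp : p ∈ T.sides)
    (h : ∀ q ∈ T.sides, ¬Matched p q) :
    segment ℝ (p.1.edge p.2).1 (p.1.edge p.2).2 ⊆ frontier Ω := by
  rcases T.conforming p.1 (Finset.mem_product.1 hp).1 _ (Tri.mem_edgeList.2 ⟨p.2, rfl⟩) with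
    hfr | ⟨t', ht', hne, e', he', hsame⟩
  · exact hfr
  · obtain ⟨j, rfl⟩ := Tri.mem_edgeList.1 he'
    exact absurd ⟨hne, hsame⟩ (h (t', j) (Finset.mem_product.2 ⟨ht', Finset.mem_univ j⟩))

lemma edgeJump_eq (u : Tri → Pt → ℝ) {t t' : Tri} (h : t.Nondeg) (h' : t'.Nondeg) :
    edgeJump u t t' = ∑ i, ∑ j, if SameEdge (t.edge i) (t'.edge j) then
      segAvg (fun x => (u t x - u t' x) ^ 2) (t.vertex i) (t.vertex (i + 1)) else 0 := by
  rw [edgeJump, t.edgeList_eq, List.map_ofFn, List.sum_ofFn]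
  refine Finset.sum_congr rfl fun i _ => ?_
  have hdist : dist (t.edge i).1 (t.edge i).2 ≠ 0 :=
    dist_ne_zero.2 (sub_ne_zero.1 (h.side_ne_zero i)).symm
  simp only [Function.comp_apply, segInt, inv_mul_cancel_left₀ hdist, Tri.mem_edgeList,
    exists_exists_eq_and]
  split_ifs with hex
  · obtain ⟨j, hj⟩ := hex
    rw [Finset.sum_eq_single_of_mem j (Finset.mem_univ j) fun k _ hk => if_neg fun hk' =>
      hk (h'.edge_injective (hk'.symm.trans hj)), if_pos hj]
    rfl
  · push Not at hex
    exact (Finset.sum_eq_zero fun j _ => if_neg (hex j)).symm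

variable (T) in
lemma two_mul_jumpSq (u : Tri → Pt → ℝ) :
    2 * T.jumpSq u = ∑ p ∈ T.sides, ∑ q ∈ T.sides, if Matched p q then
      segAvg (fun x => (u p.1 x - u q.1 x) ^ 2) (p.1.vertex p.2) (p.1.vertex (p.2 + 1)) else 0 := by
  rw [jumpSq, ← mul_assoc, mul_one_div_cancel two_ne_zero, one_mul, sides, Finset.sum_product]
  refine Finset.sum_congr rfl fun t ht => ?_
  simp only [Finset.sum_product]
  rw [Finset.sum_comm]
  refine Finset.sum_congr rfl fun t' ht' => ?_
  split_ifs with hne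
  · simp [edgeJump_eq u (T.nondeg t ht) (T.nondeg t' ht'), Matched, Ne.symm hne]
  · simp [Matched, not_not.1 hne]

variable (T) in
lemma jumpSq_nonneg (u : Tri → Pt → ℝ) : 0 ≤ T.jumpSq u := by
  refine nonneg_of_mul_nonneg_right ((T.two_mul_jumpSq u).symm ▸ ?_) two_pos
  refine Finset.sum_nonneg fun p _ => Finset.sum_nonneg fun q _ => ?_
  split_ifs
  exacts [segAvg_sq_nonneg _ _ _, le_rfl]

variable (T) in
lemma sqL2_le_normSq (u : Tri → Pt → ℝ) : T.sqL2 u ≤ T.normSq u := by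
  have hgrad : 0 ≤ T.gradSq u :=
    Finset.sum_nonneg fun t _ => integral_nonneg fun x => sq_nonneg _
  rw [normSq]
  linarith [T.jumpSq_nonneg u]

lemma PwH1.isH1 {u : Tri → Pt → ℝ} (hu : T.PwH1 u) {t : Tri} (ht : t ∈ T.tris) : t.IsH1 (u t) :=
  ⟨(hu t ht).1, (hu t ht).2.1, (hu t ht).2.2.2⟩

lemma PwH1.sum_energy {u : Tri → Pt → ℝ} (hu : T.PwH1 u) :
    ∑ t ∈ T.tris, t.energy (u t) = T.sqL2 u + T.gradSq u := by
  rw [sqL2, gradSq, ← Finset.sum_add_distrib]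
  exact Finset.sum_congr rfl fun t ht => integral_add (hu t ht).2.2.1 (hu t ht).2.2.2

lemma PwH1.sum_flux_le {u : Tri → Pt → ℝ} (hu : T.PwH1 u) {F : Pt → Pt} {M : ℝ}
    (hF : Continuous F) (hM : ∀ x, ‖F x‖ ≤ M) (hF₀ : ∀ x ∈ frontier Ω, F x = 0) :
    ∑ p ∈ T.sides, p.1.flux (u p.1) F p.2 ≤
      M * (∑ p ∈ T.sides, p.1.traceSq (u p.1) p.2 + T.jumpSq u / 2) := by
  have hsingle (p) (hp : p ∈ T.sides) (hun : ∀ q ∈ T.sides, ¬Matched p q) :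
      p.1.flux (u p.1) F p.2 - M * p.1.traceSq (u p.1) p.2 ≤ 0 := by
    rw [Tri.flux_eq_zero fun x hx =>
      hF₀ x (segment_subset_frontier_of_forall_not_matched hp hun hx), zero_sub, neg_nonpos]
    exact mul_nonneg ((norm_nonneg _).trans (hM 0)) (Tri.traceSq_nonneg _ _ _)
  have hpair (p) (hp : p ∈ T.sides) (q) (hq : q ∈ T.sides) (hpq : Matched p q) :
      p.1.flux (u p.1) F p.2 - M * p.1.traceSq (u p.1) p.2 +
        (q.1.flux (u q.1) F q.2 - M * q.1.traceSq (u q.1) q.2) ≤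
      M / 2 *
        segAvg (fun x => (u p.1 x - u q.1 x) ^ 2) (p.1.vertex p.2) (p.1.vertex (p.2 + 1)) := by
    have := (nondeg_of_mem_sides hp).flux_add_flux_le (nondeg_of_mem_sides hq)
      (hpq.disjoint_openHull hp hq) hpq.2 (hu _ (Finset.mem_product.1 hp).1).1
      (hu _ (Finset.mem_product.1 hq).1).1 hF hM
    linarith
  have hmatching := two_mul_sum_le_of_symmetric_matching T.sides (R := Matched)
    (fun _ _ => Matched.symm) (fun p hp q hq q' hq' => Matched.right_unique hp hq hq')
    hsingle hpair
  simp only [← mul_ite_zero, ← Finset.mul_sum, ← T.two_mul_jumpSq, Finset.sum_sub_distrib]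
    at hmatching
  linarith

lemma openHull_subset (T : Triangulation Ω) {t : Tri} (ht : t ∈ T.tris) : t.openHull ⊆ Ω :=
  (Tri.openHull_subset_interior_biUnion ht).trans_eq T.cover.symm

lemma dist_le_diam_of_mem_closedHull (hΩ : Bornology.IsBounded Ω) {t : Tri} (ht : t ∈ T.tris)
    {x y : Pt} (hx : x ∈ t.closedHull) (hy : y ∈ t.closedHull) : dist x y ≤ Metric.diam Ω := by
  have hne : t.openHull.Nonempty := by
    rw [Tri.openHull, Tri.closedHull, ← t.range_vertex,
      interior_convexHull_nonempty_iff_affineSpan_eq_top]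
    exact (T.nondeg t ht).basis.tot
  have hclosure : t.closedHull ⊆ closure Ω := by
    have hcvx : Convex ℝ t.closedHull := convex_convexHull ℝ _
    exact subset_closure.trans
      ((hcvx.closure_interior_eq_closure_of_nonempty_interior hne).symm.subset.trans
        (closure_mono (T.openHull_subset ht)))
  rw [← Metric.diam_closure]
  exact Metric.dist_le_diam_of_mem hΩ.closure (hclosure hx) (hclosure hy)

lemma PwH1.sum_traceSq_le {u : Tri → Pt → ℝ} (hu : T.PwH1 u) (hΩ : Bornology.IsBounded Ω) {K : ℝ}
    (hK : T.ShapeRegular K) :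
    ∑ p ∈ T.sides, p.1.traceSq (u p.1) p.2 ≤
      6 * |K| * (2 + Metric.diam Ω) * (T.sqL2 u + T.gradSq u) := by
  rw [sides, Finset.sum_product, ← hu.sum_energy, Finset.mul_sum]
  refine Finset.sum_le_sum fun t ht => ?_
  have hside (i : Fin 3) (_ : i ∈ Finset.univ) :
      t.traceSq (u t) i ≤ 2 * |K| * (2 + Metric.diam Ω) * t.energy (u t) := by
    refine ((hu.isH1 ht).traceSq_le (T.nondeg t ht)
      (fun x hx y hy => dist_le_diam_of_mem_closedHull hΩ ht hx hy) i).trans ?_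
    have := t.energy_nonneg (u t)
    have := (hK t ht).trans (le_abs_self K)
    gcongr
  refine (Finset.sum_le_card_nsmul _ _ _ hside).trans_eq ?_
  rw [Finset.card_univ, Fintype.card_fin, nsmul_eq_mul]
  push_cast
  ring

theorem PwH1.sum_integral_sq_mul_divergence_le {u : Tri → Pt → ℝ} (hu : T.PwH1 u)
    (hΩ : Bornology.IsBounded Ω) {K : ℝ} (hK : T.ShapeRegular K) {F : Pt → Pt} {L : NNReal}
    {M : ℝ} (hF : LipschitzWith L F) (hM : ∀ x, ‖F x‖ ≤ M) (hF₀ : ∀ x ∈ frontier Ω, F x = 0) :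
    ∑ t ∈ T.tris, ∫ x in t.openHull, u t x ^ 2 * divergence F x ≤
      M * (1 + 6 * |K| * (2 + Metric.diam Ω)) * T.normSq u := by
  have hM₀ : 0 ≤ M := (norm_nonneg _).trans (hM 0)
  calc ∑ t ∈ T.tris, ∫ x in t.openHull, u t x ^ 2 * divergence F x
    _ ≤ ∑ t ∈ T.tris, (∑ i, t.flux (u t) F i + M * t.energy (u t)) := Finset.sum_le_sum fun t ht =>
        (hu.isH1 ht).integral_sq_mul_divergence_le (T.nondeg t ht) hF hM
    _ = ∑ p ∈ T.sides, p.1.flux (u p.1) F p.2 + M * (T.sqL2 u + T.gradSq u) := by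
        rw [Finset.sum_add_distrib, ← Finset.mul_sum, hu.sum_energy, sides, Finset.sum_product]
    _ ≤ M * (6 * |K| * (2 + Metric.diam Ω) * (T.sqL2 u + T.gradSq u) + T.jumpSq u / 2) +
          M * (T.sqL2 u + T.gradSq u) := by
        have := hu.sum_flux_le hF.continuous hM hF₀
        have := hu.sum_traceSq_le hΩ hK
        grw [← this]
        linarith
    _ ≤ M * (1 + 6 * |K| * (2 + Metric.diam Ω)) * T.normSq u := by
        have : 0 ≤ |K| * (2 + Metric.diam Ω) := by have := Metric.diam_nonneg (s := Ω); positivity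
        rw [normSq]
        have hJ : 0 ≤ M * T.jumpSq u := mul_nonneg hM₀ (T.jumpSq_nonneg u)
        nlinarith [mul_nonneg hJ this]

end Triangulation

section Depth

variable {ι E : Type*} [Finite ι] [NormedAddCommGroup E] [NormedSpace ℝ E]
  (b : AffineBasis ι ℝ E)

/-- The smallest barycentric coordinate, a substitute for the distance to the boundary of the
simplex spanned by `b`: it is positive exactly in the interior of this simplex. -/
def depth (x : E) : ℝ := ⨅ i, b.coord i x

lemma depth_le_coord (i : ι) (x : E) : depth b x ≤ b.coord i x :=
  ciInf_le (finite_range _).bddBelow i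

lemma exists_coord_eq_depth (x : E) : ∃ i, b.coord i x = depth b x :=
  have := b.nonempty
  exists_eq_ciInf_of_finite

lemma depth_pos_iff {x : E} : 0 < depth b x ↔ ∀ i, 0 < b.coord i x := by
  obtain ⟨i, hi⟩ := exists_coord_eq_depth b x
  exact ⟨fun h i => h.trans_le (depth_le_coord b i x), fun h => hi ▸ h i⟩

lemma exists_lipschitzWith_depth [FiniteDimensional ℝ E] : ∃ L, LipschitzWith L (depth b) := by
  cases nonempty_fintype ι
  choose L hL using fun i => (b.coord i).lipschitzWith_of_finiteDimensional
  refine ⟨∑ i, L i, LipschitzWith.of_le_add_mul _ fun x y => ?_⟩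
  obtain ⟨i, hi⟩ := exists_coord_eq_depth b y
  calc depth b x ≤ b.coord i x := depth_le_coord b i x
    _ ≤ b.coord i y + L i * dist x y := (hL i).le_add_mul x y
    _ ≤ depth b y + ↑(∑ i, L i) * dist x y := by
        rw [hi]
        gcongr
        exact Finset.single_le_sum (fun _ _ => zero_le) (Finset.mem_univ i)

lemma isBounded_setOf_depth_pos : Bornology.IsBounded {x | 0 < depth b x} := by
  refine ((finite_range b).isCompact_convexHull ℝ).isBounded.subset fun x hx => ?_
  rw [b.convexHull_eq_nonneg_coord]
  exact fun i => ((depth_pos_iff b).1 hx i).le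

end Depth

lemma lipschitzWith_smul_of_norm_le_of_ne_zero {X E : Type*} [PseudoMetricSpace X]
    [NormedAddCommGroup E] [NormedSpace ℝ E] {φ : X → ℝ} {g : X → E} {L K s D : NNReal}
    (hφ : LipschitzWith L φ) (hg : LipschitzWith K g) (hφs : ∀ x, |φ x| ≤ s)
    (hgD : ∀ x, φ x ≠ 0 → ‖g x‖ ≤ D) :
    LipschitzWith (D * L + s * K) fun x => φ x • g x := by
  have hle (x y : X) (hx : φ x ≠ 0) :
      dist (φ x • g x) (φ y • g y) ≤ ↑(D * L + s * K) * dist x y := by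
    have hsplit : φ x • g x - φ y • g y = (φ x - φ y) • g x + φ y • (g x - g y) := by module
    calc dist (φ x • g x) (φ y • g y)
      _ ≤ dist (φ x) (φ y) * ‖g x‖ + |φ y| * dist (g x) (g y) := by
          rw [dist_eq_norm, hsplit, dist_eq_norm, dist_eq_norm, ← Real.norm_eq_abs, ← norm_smul,
            ← norm_smul]
          exact norm_add_le _ _
      _ ≤ L * dist x y * D + s * (K * dist x y) := by
          have := hφ.dist_le_mul x y
          have := hg.dist_le_mul x y
          gcongr
          exacts [hgD x hx, hφs y]
      _ = ↑(D * L + s * K) * dist x y := by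
          push_cast
          ring
  refine LipschitzWith.of_dist_le_mul fun x y => ?_
  by_cases hx : φ x = 0
  · by_cases hy : φ y = 0
    · rw [hx, hy, zero_smul, zero_smul, dist_self]
      positivity
    · rw [dist_comm, dist_comm x]
      exact hle y x hy
  · exact hle x y hx

section LayerField

variable {E : Type*} [NormedAddCommGroup E] [NormedSpace ℝ E] [MeasurableSpace E]

/-- `F` is a Lipschitz field of size at most `ε` that vanishes on `Z` and whose divergence, up to an
error `ε`, is nonnegative everywhere and at least `κ` on the layer `A`. -/
structure IsLayerField (μ : Measure E) (κ ε : ℝ) (A Z : Set E) (F : E → E) : Prop where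
  lipschitz : ∃ L, LipschitzWith L F
  norm_le : ∀ x, ‖F x‖ ≤ ε
  eq_zero : ∀ x ∈ Z, F x = 0
  ae_le_divergence : ∀ᵐ x ∂μ, A.indicator (fun _ => κ) x ≤ divergence F x + ε

namespace IsLayerField

variable {μ : Measure E} {κ ε ε' : ℝ} {A B Z : Set E} {F G : E → E}

lemma mono (h : IsLayerField μ κ ε B Z F) (hκ : 0 ≤ κ) {Z' : Set E} (hZ : Z' ⊆ Z)
    (hAB : ∀ᵐ x ∂μ, x ∈ A → x ∈ B) (hε : ε ≤ ε') : IsLayerField μ κ ε' A Z' F where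
  lipschitz := h.lipschitz
  norm_le x := (h.norm_le x).trans hε
  eq_zero x hx := h.eq_zero x (hZ hx)
  ae_le_divergence := by
    filter_upwards [h.ae_le_divergence, hAB] with x hx hxAB
    refine indicator_apply_le' (fun hxA => ?_) fun _ => ?_
    · rw [indicator_of_mem (hxAB hxA)] at hx
      linarith
    · have := indicator_nonneg (s := B) (fun _ _ => hκ) x
      linarith

protected lemma zero : IsLayerField μ κ 0 ∅ Z (0 : E → E) where
  lipschitz := ⟨0, LipschitzWith.const 0⟩
  norm_le := by simp
  eq_zero := by simp
  ae_le_divergence := by simp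

variable [BorelSpace E] [FiniteDimensional ℝ E] [μ.IsAddHaarMeasure]

protected lemma add (hF : IsLayerField μ κ ε A Z F) (hG : IsLayerField μ κ ε' B Z G) (hκ : 0 ≤ κ) :
    IsLayerField μ κ (ε + ε') (A ∪ B) Z (F + G) := by
  obtain ⟨LF, hLF⟩ := hF.lipschitz
  obtain ⟨LG, hLG⟩ := hG.lipschitz
  refine ⟨⟨LF + LG, hLF.add hLG⟩, fun x => norm_add_le_of_le (hF.norm_le x) (hG.norm_le x),
    fun x hx => by rw [Pi.add_apply, hF.eq_zero x hx, hG.eq_zero x hx, add_zero], ?_⟩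
  filter_upwards [hF.ae_le_divergence, hG.ae_le_divergence, hLF.ae_differentiableAt,
    hLG.ae_differentiableAt] with x hFx hGx hdF hdG
  rw [divergence_add hdF hdG]
  have hunion := congrFun (indicator_union_add_inter (fun _ => κ) A B) x
  have hinter := indicator_nonneg (s := A ∩ B) (fun _ _ => hκ) x
  simp only [Pi.add_apply] at hunion
  linarith

protected lemma sum {ι : Type*} {S : Finset ι} {ε : ι → ℝ} {A : ι → Set E} {F : ι → E → E}
    (h : ∀ i ∈ S, IsLayerField μ κ (ε i) (A i) Z (F i)) (hκ : 0 ≤ κ) :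
    IsLayerField μ κ (∑ i ∈ S, ε i) (⋃ i ∈ S, A i) Z (∑ i ∈ S, F i) := by
  induction S using Finset.induction_on with
  | empty => simpa using IsLayerField.zero
  | insert i S hi ih =>
    rw [Finset.sum_insert hi, Finset.sum_insert hi, Finset.set_biUnion_insert]
    exact (h i (Finset.mem_insert_self i S)).add
      (ih fun j hj => h j (Finset.mem_insert_of_mem hj)) hκ

end IsLayerField

end LayerField

section SimplexLayer

variable {ι E : Type*} [NormedAddCommGroup E] [NormedSpace ℝ E] (b : AffineBasis ι ℝ E)
  {s : ℝ} {x : E}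

/-- The depth in the simplex spanned by `b`, truncated to `[0, s]`. -/
def cutoff (s : ℝ) (x : E) : ℝ := max 0 (min s (depth b x))

lemma cutoff_nonneg : 0 ≤ cutoff b s x := le_max_left _ _

lemma cutoff_le (hs : 0 ≤ s) : cutoff b s x ≤ s := max_le hs (min_le_left _ _)

lemma cutoff_le_depth (hx : 0 ≤ depth b x) : cutoff b s x ≤ depth b x :=
  max_le hx (min_le_right _ _)

lemma cutoff_of_depth_nonpos (hx : depth b x ≤ 0) : cutoff b s x = 0 :=
  max_eq_left ((min_le_right _ _).trans hx)

lemma cutoff_of_depth_le (hx : 0 ≤ depth b x) (hxs : depth b x ≤ s) :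
    cutoff b s x = depth b x := by
  rw [cutoff, min_eq_right hxs, max_eq_right hx]

lemma cutoff_of_le_depth (hs : 0 ≤ s) (hx : s ≤ depth b x) : cutoff b s x = s := by
  rw [cutoff, min_eq_left hx, max_eq_right hs]

lemma fderiv_cutoff_eq_zero (hs : 0 ≤ s) (hx : x ∉ {y | 0 < depth b y ∧ depth b y ≤ s}) :
    fderiv ℝ (cutoff b s) x = 0 := by
  rcases le_or_gt (depth b x) 0 with hneg | hpos
  · refine IsLocalMin.fderiv_eq_zero (Filter.Eventually.of_forall fun y => ?_)
    rw [cutoff_of_depth_nonpos b hneg]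
    exact cutoff_nonneg b
  · refine IsLocalMax.fderiv_eq_zero (Filter.Eventually.of_forall fun y => ?_)
    rw [cutoff_of_le_depth b hs (not_le.1 fun h => hx ⟨hpos, h⟩).le]
    exact cutoff_le b hs

lemma exists_lipschitzWith_cutoff [Finite ι] [FiniteDimensional ℝ E] (s : ℝ) :
    ∃ L, LipschitzWith L (cutoff b s) := by
  obtain ⟨L, hL⟩ := exists_lipschitzWith_depth b
  exact ⟨L, (hL.const_min s).const_max 0⟩

variable [Fintype ι]

/-- The centre of the simplex spanned by `b`. -/
def simplexCenter : E := Finset.univ.centroid ℝ b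

/-- The field that points to the centre of the simplex spanned by `b`, cut off at depth `s`. -/
def inwardField (s : ℝ) (x : E) : E := cutoff b s x • (simplexCenter b - x)

lemma coord_simplexCenter (i : ι) : b.coord i (simplexCenter b) = (Fintype.card ι : ℝ)⁻¹ :=
  b.coord_apply_centroid (Finset.mem_univ i)

variable [FiniteDimensional ℝ E]

lemma fderiv_cutoff_simplexCenter_sub (hd : DifferentiableAt ℝ (cutoff b s) x)
    (hx : x ∈ {y | 0 < depth b y ∧ depth b y ≤ s}) :
    fderiv ℝ (cutoff b s) x (simplexCenter b - x) = (Fintype.card ι : ℝ)⁻¹ - depth b x := by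
  obtain ⟨i, hi⟩ := exists_coord_eq_depth b x
  obtain ⟨L, hL⟩ := exists_lipschitzWith_depth b
  let c : E →ᴬ[ℝ] ℝ := ⟨b.coord i, (b.coord i).continuous_of_finiteDimensional⟩
  -- Where it is smallest, the coordinate touches the cutoff from above.
  have hmin : IsLocalMin (fun y => c y - cutoff b s y) x := by
    filter_upwards [continuousAt_const.eventually_lt hL.continuous.continuousAt hx.1] with y hy
    change b.coord i x - _ ≤ b.coord i y - _
    rw [cutoff_of_depth_le b hx.1.le hx.2, hi, sub_self, sub_nonneg]
    exact (cutoff_le_depth b hy.le).trans (depth_le_coord b i y)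
  have hderiv := hmin.hasFDerivAt_eq_zero (c.hasFDerivAt.sub hd.hasFDerivAt)
  rw [← sub_eq_zero.1 hderiv, ← hi, ← coord_simplexCenter b i]
  exact (b.coord i).linearMap_vsub _ _

lemma indicator_le_divergence_inwardField_add (hd : DifferentiableAt ℝ (cutoff b s) x)
    (hs : 0 ≤ s) :
    {y | 0 < depth b y ∧ depth b y ≤ s}.indicator (fun _ => (Fintype.card ι : ℝ)⁻¹) x ≤
      divergence (inwardField b s) x + (Module.finrank ℝ E + 1) * s := by
  have hcut : Module.finrank ℝ E * cutoff b s x ≤ Module.finrank ℝ E * s := by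
    gcongr
    exact cutoff_le b hs
  have hdiv : divergence (inwardField b s) x = _ := divergence_smul_const_sub hd (simplexCenter b)
  rw [hdiv]
  by_cases hx : x ∈ {y | 0 < depth b y ∧ depth b y ≤ s}
  · rw [indicator_of_mem hx, fderiv_cutoff_simplexCenter_sub b hd hx]
    linarith [hx.2]
  · rw [indicator_of_notMem hx, fderiv_cutoff_eq_zero b hs hx, _root_.zero_apply]
    linarith

lemma exists_isLayerField_inwardField [MeasurableSpace E] [BorelSpace E] (μ : Measure E)
    [μ.IsAddHaarMeasure] :
    ∃ c, ∀ s, 0 ≤ s → IsLayerField μ (Fintype.card ι : ℝ)⁻¹ (c * s)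
      {x | 0 < depth b x ∧ depth b x ≤ s} {x | depth b x ≤ 0} (inwardField b s) := by
  obtain ⟨D, hD₀, hD⟩ := (isBounded_setOf_depth_pos b).exists_pos_norm_le
  lift D to NNReal using hD₀.le
  have hcenter (s : ℝ) (x : E) (hx : cutoff b s x ≠ 0) :
      ‖simplexCenter b - x‖ ≤ ↑(‖simplexCenter b‖₊ + D) :=
    norm_sub_le_of_le le_rfl (hD x (not_le.1 fun h => hx (cutoff_of_depth_nonpos b h)))
  refine ⟨↑(‖simplexCenter b‖₊ + D) + (Module.finrank ℝ E + 1), fun s hs => ?_⟩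
  lift s to NNReal using hs
  obtain ⟨L, hL⟩ := exists_lipschitzWith_cutoff b s
  have habs (x : E) : |cutoff b s x| ≤ s := by
    rw [abs_of_nonneg (cutoff_nonneg b)]
    exact cutoff_le b s.2
  refine ⟨⟨_, lipschitzWith_smul_of_norm_le_of_ne_zero hL
    ((LipschitzWith.const (simplexCenter b)).sub LipschitzWith.id) habs (hcenter s)⟩,
    fun x => ?_, fun x hx => ?_, ?_⟩
  · rw [inwardField, norm_smul, Real.norm_eq_abs, add_mul]
    by_cases hx : cutoff b s x = 0
    · rw [hx, abs_zero, zero_mul]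
      positivity
    · have := mul_le_mul (habs x) (hcenter s x hx) (norm_nonneg _) s.2
      have : 0 ≤ (Module.finrank ℝ E + 1) * (s : ℝ) := by positivity
      linarith
  · rw [inwardField, cutoff_of_depth_nonpos b hx, zero_smul]
  · filter_upwards [hL.ae_differentiableAt] with x hx
    refine (indicator_le_divergence_inwardField_add b hx s.2).trans ?_
    exact add_le_add_right (mul_le_mul_of_nonneg_right
      (le_add_of_nonneg_left (NNReal.coe_nonneg _)) s.2) _

end SimplexLayer

section Polygon

variable {Ω : Set Pt}

lemma Tri.ae_mem_openHull_of_mem_closedHull (t : Tri) :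
    ∀ᵐ x, x ∈ t.closedHull → x ∈ t.openHull := by
  have hnull := (convex_convexHull ℝ {t.A, t.B, t.C}).addHaar_frontier volume
  filter_upwards [measure_eq_zero_iff_ae_notMem.1 hnull] with x hx hxt
  exact not_not.1 fun h => hx ⟨subset_closure hxt, h⟩

lemma ae_exists_mem_openHull (S : Finset Tri) :
    ∀ᵐ x, x ∈ ⋃ t ∈ S, t.closedHull → ∃ t ∈ S, x ∈ t.openHull := by
  filter_upwards [(Filter.eventually_all_finset S).2
    fun t _ => t.ae_mem_openHull_of_mem_closedHull] with x hx hxS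
  obtain ⟨t, ht, hxt⟩ := mem_iUnion₂.1 hxS
  exact ⟨t, ht, hx t ht hxt⟩

lemma exists_mem_frontier_dist_le {E : Type*} [NormedAddCommGroup E] [NormedSpace ℝ E]
    [Nontrivial E] [ProperSpace E] {U : Set E} (hne : U.Nonempty) (hb : Bornology.IsBounded U)
    {x : E} {δ : ℝ} (hx : Metric.infDist x (frontier U) ≤ δ) : ∃ y ∈ frontier U, dist x y ≤ δ := by
  have hfrontier : (frontier U).Nonempty := by
    refine nonempty_frontier_iff.2 ⟨hne, ?_⟩
    rintro rfl
    exact NormedSpace.unbounded_univ ℝ E hb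
  obtain ⟨y, hy, hxy⟩ := isClosed_frontier.exists_infDist_eq_dist hfrontier x
  exact ⟨y, hy, hxy ▸ hx⟩

lemma Tri.Nondeg.mem_openHull_iff_depth_pos {t : Tri} (h : t.Nondeg) {x : Pt} :
    x ∈ t.openHull ↔ 0 < depth h.basis x := by
  rw [depth_pos_iff, h.openHull_eq]
  rfl

lemma Tri.Nondeg.exists_isLayerField {t : Tri} (h : t.Nondeg) (hne : Ω.Nonempty)
    (hb : Bornology.IsBounded Ω) (hΩ : Disjoint t.openHull (frontier Ω)) :
    ∃ c, ∀ δ, 0 ≤ δ → ∃ F, IsLayerField volume 3⁻¹ (c * δ)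
      (t.openHull ∩ {x | Metric.infDist x (frontier Ω) ≤ δ}) (frontier Ω) F := by
  obtain ⟨c, hc⟩ := exists_isLayerField_inwardField h.basis volume
  obtain ⟨L, hL⟩ := exists_lipschitzWith_depth h.basis
  have hdepth (y : Pt) (hy : y ∈ frontier Ω) : depth h.basis y ≤ 0 :=
    not_lt.1 fun hpos => hΩ.notMem_of_mem_right hy (h.mem_openHull_iff_depth_pos.2 hpos)
  refine ⟨c * L, fun δ hδ => ⟨inwardField h.basis (L * δ), ?_⟩⟩
  have hfield := hc (L * δ) (by positivity)
  rw [← mul_assoc, Fintype.card_fin, Nat.cast_ofNat] at hfield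
  refine hfield.mono (by norm_num) hdepth (ae_of_all _ fun x hx => ?_) le_rfl
  refine ⟨h.mem_openHull_iff_depth_pos.1 hx.1, ?_⟩
  obtain ⟨y, hy, hxy⟩ := exists_mem_frontier_dist_le hne hb hx.2
  calc depth h.basis x ≤ depth h.basis y + L * dist x y := hL.le_add_mul x y
    _ ≤ 0 + L * δ := by
        gcongr
        exact hdepth y hy
    _ = L * δ := zero_add _

lemma IsPolygon.exists_isLayerField (hΩ : IsPolygon Ω) :
    ∃ c, 0 < c ∧ ∀ δ, 0 ≤ δ → ∃ F, IsLayerField volume 3⁻¹ (c * δ)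
      (Ω ∩ {x | Metric.infDist x (frontier Ω) ≤ δ}) (frontier Ω) F := by
  obtain ⟨hne, hb, S, hS, hcov⟩ := hΩ
  have hopen : IsOpen Ω := by
    rw [hcov]
    exact isOpen_interior
  have hdisj (t : Tri) (ht : t ∈ S) : Disjoint t.openHull (frontier Ω) :=
    (disjoint_frontier_iff_isOpen.2 hopen).symm.mono_left
      ((Tri.openHull_subset_interior_biUnion ht).trans_eq hcov.symm)
  choose! c F hF using fun t ht => (hS t ht).exists_isLayerField hne hb (hdisj t ht)
  refine ⟨max (∑ t ∈ S, c t) 1, by positivity, fun δ hδ => ⟨∑ t ∈ S, F t δ, ?_⟩⟩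
  have hsum := IsLayerField.sum (fun t ht => hF t ht δ hδ) (by norm_num)
  rw [← Finset.sum_mul] at hsum
  refine hsum.mono (by norm_num) Subset.rfl ?_ (by gcongr; exact le_max_left _ _)
  filter_upwards [ae_exists_mem_openHull S] with x hx hxΩ
  obtain ⟨t, ht, hxt⟩ := hx (interior_subset (hcov ▸ hxΩ.1))
  exact mem_iUnion₂.2 ⟨t, ht, hxt, hxΩ.2⟩

end Polygon

lemma Triangulation.PwH1.mul_sum_integral_sq_le {Ω : Set Pt} {T : Triangulation Ω}
    {u : Tri → Pt → ℝ} (hu : T.PwH1 u) {κ ε : ℝ} {A : Set Pt} {F : Pt → Pt} (hA : MeasurableSet A)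
    (hF : IsLayerField volume κ ε (Ω ∩ A) (frontier Ω) F) :
    κ * ∑ t ∈ T.tris, ∫ x in t.openHull ∩ A, u t x ^ 2 ≤
      (∑ t ∈ T.tris, ∫ x in t.openHull, u t x ^ 2 * divergence F x) + ε * T.sqL2 u := by
  obtain ⟨L, hL⟩ := hF.lipschitz
  rw [Triangulation.sqL2, Finset.mul_sum, Finset.mul_sum, ← Finset.sum_add_distrib]
  refine Finset.sum_le_sum fun t ht => ?_
  have hsq : IntegrableOn (fun x => u t x ^ 2) t.openHull := (hu t ht).2.2.1
  have hdiv : IntegrableOn (fun x => u t x ^ 2 * divergence F x) t.openHull :=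
    Tri.integrableOn_mul_divergence ((hu t ht).1.pow 2) hL
  rw [← setIntegral_indicator hA, ← integral_const_mul, ← integral_const_mul,
    ← integral_add hdiv (hsq.const_mul ε)]
  refine integral_mono_ae ((hsq.indicator hA).const_mul κ) (hdiv.add (hsq.const_mul ε)) ?_
  filter_upwards [ae_restrict_of_ae hF.ae_le_divergence,
    ae_restrict_mem t.measurableSet_openHull] with x hx hxt
  have hlocal : A.indicator (fun _ => κ) x ≤ divergence F x + ε := by
    simpa [indicator, T.openHull_subset ht hxt] using hx
  calc κ * A.indicator (fun x => u t x ^ 2) x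
    _ = A.indicator (fun _ => κ) x * u t x ^ 2 := by
        by_cases hx : x ∈ A <;> simp [hx]
    _ ≤ (divergence F x + ε) * u t x ^ 2 := by gcongr
    _ = u t x ^ 2 * divergence F x + ε * u t x ^ 2 := by ring

/-- Boundary strip smallness: with `Ω_δ` the set of points of `Ω` within distance `δ` of
`∂Ω`, one has `∫_{Ω_δ} u² ≤ C δ ‖u‖²_{H¹_h}`, with `C` depending only on `Ω` and `𝒦`. -/
theorem boundary_strip_smallness (Ω : Set Pt) (hΩ : IsPolygon Ω) (K : ℝ) :
    ∃ C : ℝ, 0 < C ∧ ∀ δ : ℝ, 0 < δ → ∀ T : Triangulation Ω, T.ShapeRegular K →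
      ∀ u : Tri → Pt → ℝ, T.PwH1 u →
        (∑ t ∈ T.tris,
            ∫ x in t.openHull ∩ {y | Metric.infDist y (frontier Ω) ≤ δ}, (u t x) ^ 2)
          ≤ C * δ * T.normSq u := by
  obtain ⟨c, hc₀, hc⟩ := hΩ.exists_isLayerField
  have hb : Bornology.IsBounded Ω := hΩ.2.1
  refine ⟨3 * c * (2 + 6 * |K| * (2 + Metric.diam Ω)), ?_, fun δ hδ T hK u hu => ?_⟩
  · have := Metric.diam_nonneg (s := Ω)
    positivity
  obtain ⟨F, hF⟩ := hc δ hδ.le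
  obtain ⟨L, hL⟩ := hF.lipschitz
  have hstrip : MeasurableSet {y : Pt | Metric.infDist y (frontier Ω) ≤ δ} :=
    measurableSet_le (Metric.continuous_infDist_pt _).measurable measurable_const
  have hlower := hu.mul_sum_integral_sq_le hstrip hF
  have hupper := hu.sum_integral_sq_mul_divergence_le hb hK hL hF.norm_le hF.eq_zero
  have hL2 : c * δ * T.sqL2 u ≤ c * δ * T.normSq u := by
    gcongr
    exact T.sqL2_le_normSq u
  linarith
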